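/- arXiv:2308.04599 — 5 statements merged into one kernel-verified Lean document; each statement's English description precedes it below -/
import Mathlib

section
/- Let F be an algebraically closed field and let f ∈ F[x₁,…,xₙ] be a polynomial whose constant term is zero, such that the dimension of Sing(f) is strictly less than n−4. Then every determinantal representation M of f of size s is regular, i.e., the rank of the constant part M(0) is exactly s−1. -/
open MvPolynomial Matrix

/-!
The constant part `M(0)` is singular because `det M(0)` is the constant term of `f`. Suppose its
rank is at most `s - 2`. Then the adjugate of `M(0)` vanishes, so the ideal `cofactorIdeal M`
generated by the maximal proper minors of `M` is contained in the ideal of the origin, and it has a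
minimal prime `P`. Expanding along a row, and differentiating the determinant column by column,
shows that `f = det M` and all `∂f/∂xᵢ` lie in `cofactorIdeal M`, hence in `P`. It remains to see
that `P` is large, in the sense that `dim F[x]/P ≥ n - 4`; this contradicts the bound on the
singular locus.

The dimension bound combines two facts.

* Every minimal prime `P` of the cofactor ideal of a square matrix over a Noetherian ring has height
  at most `4` (`height_le_four_of_mem_minimalPrimes_cofactorIdeal`), by induction on the size. If
  some entry is not in `P`, the matrix may be replaced by its fraction-free Schur complement at that
  entry, since both cofactor ideals lie in the same primes below `P`. If all entries are in `P` and
  the size is `2`, Krull's height theorem for the four entries applies. If all entries are in `P` and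
  the size is at least `3`, the indeterminate of `R[X]` is added to one entry: the extension
  `P R[X]` is still a minimal prime of the new cofactor ideal (`map_C_mem_minimalPrimes_perturb`),
  and the perturbed entry is not in it, which reduces to the case already treated.
* `n ≤ ht P + dim F[x₁,…,xₙ]/P` for every prime `P` (`le_height_add_ringKrullDim_quotient`): choose
  `ht P` elements over whose span `P` is minimal, and a maximal ideal containing `P` but no
  other minimal prime of that span; it has height `n`, and Krull's theorem bounds this height.
-/

/-! ### The ideal of cofactors -/

/-- The ideal generated by the entries of the adjugate of `M`, that is, by the minors of size one
less than that of `M`. -/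
def cofactorIdeal {ι R : Type*} [Fintype ι] [DecidableEq ι] [CommRing R] (M : Matrix ι ι R) :
    Ideal R :=
  Ideal.span (Set.range fun p : ι × ι => M.adjugate p.1 p.2)

lemma cofactorIdeal_le_comap_iff {ι R S : Type*} [Fintype ι] [DecidableEq ι] [CommRing R]
    [CommRing S] (M : Matrix ι ι R) (φ : R →+* S) (Q : Ideal S) :
    cofactorIdeal M ≤ Q.comap φ ↔
      (M.map ((Ideal.Quotient.mk Q).comp φ)).adjugate = 0 := by
  have h := RingHom.map_adjugate ((Ideal.Quotient.mk Q).comp φ) M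
  rw [RingHom.mapMatrix_apply, RingHom.mapMatrix_apply] at h
  rw [← h, cofactorIdeal, Ideal.span_le, Set.range_subset_iff, ← Matrix.ext_iff]
  simp [Prod.forall, Ideal.Quotient.eq_zero_iff_mem]

lemma cofactorIdeal_le_iff {ι R : Type*} [Fintype ι] [DecidableEq ι] [CommRing R]
    (M : Matrix ι ι R) (Q : Ideal R) :
    cofactorIdeal M ≤ Q ↔ (M.map (Ideal.Quotient.mk Q)).adjugate = 0 :=
  cofactorIdeal_le_comap_iff M (RingHom.id R) Q

lemma det_mem_cofactorIdeal {ι R : Type*} [Fintype ι] [DecidableEq ι] [Nonempty ι] [CommRing R]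
    (M : Matrix ι ι R) : M.det ∈ cofactorIdeal M := by
  obtain ⟨i⟩ := ‹Nonempty ι›
  rw [det_eq_sum_mul_adjugate_row M i]
  exact Ideal.sum_mem _ fun j _ => Ideal.mul_mem_left _ _ (Ideal.subset_span ⟨(j, i), rfl⟩)

lemma derivation_prod {ι A R : Type*} [DecidableEq ι] [CommRing A] [CommRing R] [Algebra A R]
    (D : Derivation A R R) (s : Finset ι) (g : ι → R) :
    D (∏ i ∈ s, g i) = ∑ i ∈ s, (∏ j ∈ s.erase i, g j) * D (g i) := by
  induction s using Finset.induction_on with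
  | empty => simp
  | insert a s ha ih =>
    rw [Finset.prod_insert ha, D.leibniz, ih, Finset.sum_insert ha, Finset.erase_insert ha,
      smul_eq_mul, smul_eq_mul, Finset.mul_sum, add_comm]
    congr 1
    refine Finset.sum_congr rfl fun i hi => ?_
    have hia : a ≠ i := fun h => ha (h ▸ hi)
    rw [Finset.erase_insert_of_ne hia, Finset.prod_insert (by simp [ha]), mul_assoc]

/-- A derivation acts on a determinant one column at a time. -/
lemma derivation_det {ι A R : Type*} [Fintype ι] [DecidableEq ι] [CommRing A] [CommRing R]
    [Algebra A R] (D : Derivation A R R) (M : Matrix ι ι R) :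
    D M.det = ∑ i, (M.updateCol i fun k => D (M k i)).det := by
  simp only [det_apply, map_sum]
  rw [Finset.sum_comm]
  refine Finset.sum_congr rfl fun σ _ => ?_
  rw [← Finset.smul_sum, Units.smul_def, map_zsmul, derivation_prod, Units.smul_def]
  congr 1
  refine Finset.sum_congr rfl fun i _ => ?_
  rw [← Finset.prod_erase_mul _ _ (Finset.mem_univ i)]
  congr 1
  · exact Finset.prod_congr rfl fun j hj => by rw [updateCol_ne (Finset.ne_of_mem_erase hj)]
  · simp

lemma derivation_det_mem_cofactorIdeal {ι A R : Type*} [Fintype ι] [DecidableEq ι] [CommRing A]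
    [CommRing R] [Algebra A R] (D : Derivation A R R) (M : Matrix ι ι R) :
    D M.det ∈ cofactorIdeal M := by
  rw [derivation_det]
  refine Ideal.sum_mem _ fun i _ => ?_
  rw [← cramer_apply, cramer_eq_adjugate_mulVec]
  exact Ideal.sum_mem _ fun j _ => Ideal.mul_mem_right _ _ (Ideal.subset_span ⟨(i, j), rfl⟩)

/-! ### Vanishing of the adjugate and the Schur complement -/

/-- Over a field, the adjugate vanishes exactly when the corank is at least `2`; the rank normal form
reduces this to diagonal matrices with entries `0` and `1`. The index type has to be nonempty because
the empty matrix has adjugate `0` and corank `0`. -/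
lemma adjugate_eq_zero_iff_rank {ι K : Type*} [Fintype ι] [DecidableEq ι] [Nonempty ι] [Field K]
    (A : Matrix ι ι K) : A.adjugate = 0 ↔ A.rank + 2 ≤ Fintype.card ι := by
  obtain ⟨V, U, e, hV, hU, h⟩ := A.exists_rank_normal_form
  have hadj : ∀ B : Matrix ι ι K, IsUnit B → IsUnit B.adjugate := fun B hB => by
    rw [isUnit_iff_isUnit_det, det_adjugate]
    exact ((isUnit_iff_isUnit_det B).1 hB).pow _
  have hle := A.rank_le_card_width
  set d : ι → K := fun i => if (e i).isLeft then 1 else 0 with hd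
  have hdiag : (fromBlocks (1 : Matrix (Fin A.rank) (Fin A.rank) K) 0 0
      (0 : Matrix (Fin (Fintype.card ι - A.rank)) (Fin (Fintype.card ι - A.rank)) K)).submatrix e e
      = diagonal d := by
    rw [← diagonal_one, ← diagonal_zero, fromBlocks_diagonal, submatrix_diagonal_equiv]
    refine congrArg _ (funext fun i => ?_)
    rcases h : e i with j | j <;> simp [hd, h]
  have h1 : A.adjugate = 0 ↔ (diagonal d).adjugate = 0 := by
    rw [← hdiag, ← h, adjugate_mul_distrib, adjugate_mul_distrib,
      (hadj U hU).mul_right_eq_zero, (hadj V hV).mul_left_eq_zero]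
  rw [h1, adjugate_diagonal, diagonal_eq_zero, funext_iff]
  simp only [Pi.zero_apply, Finset.prod_eq_zero_iff, Finset.mem_erase, Finset.mem_univ, and_true]
  have hd0 : ∀ i, d i = 0 ↔ ∃ k, i = e.symm (Sum.inr k) := fun i => by
    rcases h : e i with j | j
    · simp [hd, h, Equiv.eq_symm_apply]
    · simp only [hd, h, Sum.isLeft_inr, Bool.false_eq_true, if_false, true_iff]
      exact ⟨j, by rw [← h, e.symm_apply_apply]⟩
  constructor
  · intro H
    obtain ⟨i⟩ := ‹Nonempty ι›
    obtain ⟨a, -, ha⟩ := H i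
    obtain ⟨b, hba, hb⟩ := H a
    obtain ⟨k, rfl⟩ := (hd0 _).1 ha
    obtain ⟨l, rfl⟩ := (hd0 _).1 hb
    have : l ≠ k := fun h => hba (by rw [h])
    have := Fin.val_ne_of_ne this
    omega
  · intro H i
    set k : Fin (Fintype.card ι - A.rank) := ⟨0, by omega⟩
    set l : Fin (Fintype.card ι - A.rank) := ⟨1, by omega⟩
    have hkl : k ≠ l := by simp [k, l]
    by_cases hi : e.symm (Sum.inr k) = i
    · refine ⟨e.symm (Sum.inr l), fun h => hkl ?_, (hd0 _).2 ⟨l, rfl⟩⟩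
      simpa using hi.trans h.symm
    · exact ⟨_, hi, (hd0 _).2 ⟨k, rfl⟩⟩

/-- The Schur complement of `A` at its `(0, 0)` entry, multiplied by that entry so that it is defined
over any commutative ring. -/
def schurComplement {m : ℕ} {R : Type*} [CommRing R] (A : Matrix (Fin (m + 1)) (Fin (m + 1)) R) :
    Matrix (Fin m) (Fin m) R :=
  Matrix.of fun k l => A 0 0 * A k.succ l.succ - A k.succ 0 * A 0 l.succ

/-- Forgetting the zeroth coordinate is an isomorphism from the kernel of `A` onto the kernel of its
Schur complement. -/
lemma rank_eq_rank_schurComplement_add_one {m : ℕ} {K : Type*} [Field K]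
    (A : Matrix (Fin (m + 1)) (Fin (m + 1)) K) (h : A 0 0 ≠ 0) :
    A.rank = (schurComplement A).rank + 1 := by
  have hS : ∀ (x : K) (w : Fin m → K) (k : Fin m), A 0 0 * x + ∑ l, A 0 l.succ * w l = 0 →
      (schurComplement A *ᵥ w) k = A 0 0 * (A k.succ 0 * x + ∑ l, A k.succ l.succ * w l) := by
    intro x w k hx
    have : (schurComplement A *ᵥ w) k = A 0 0 * (∑ l, A k.succ l.succ * w l)
        - A k.succ 0 * ∑ l, A 0 l.succ * w l := by
      simp only [mulVec, dotProduct, schurComplement, of_apply, Finset.mul_sum,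
        ← Finset.sum_sub_distrib]
      exact Finset.sum_congr rfl fun l _ => by ring
    rw [this, eq_neg_of_add_eq_zero_right hx]
    ring
  have hA : ∀ (v : Fin (m + 1) → K) i,
      (A *ᵥ v) i = A i 0 * v 0 + ∑ l : Fin m, A i l.succ * v l.succ :=
    fun v i => by simp only [mulVec, dotProduct, Fin.sum_univ_succ]
  let T : LinearMap.ker A.mulVecLin →ₗ[K] LinearMap.ker (schurComplement A).mulVecLin :=
    (LinearMap.funLeft K K Fin.succ).restrict fun v hv => by
      rw [LinearMap.mem_ker, mulVecLin_apply] at hv ⊢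
      funext k
      have h0 := congrFun hv 0
      have hk := congrFun hv k.succ
      rw [hA, Pi.zero_apply] at h0 hk
      exact (hS (v 0) _ k h0).trans (by rw [hk, mul_zero, Pi.zero_apply])
  have hT : Function.Bijective T := by
    constructor
    · rw [← LinearMap.ker_eq_bot, LinearMap.ker_eq_bot']
      rintro ⟨v, hv⟩ hTv
      have hw : ∀ l : Fin m, v l.succ = 0 := fun l => congrFun (congrArg Subtype.val hTv) l
      have h0 := congrFun (LinearMap.mem_ker.1 hv) 0
      rw [mulVecLin_apply, hA] at h0
      simp only [hw, mul_zero, Finset.sum_const_zero, add_zero, Pi.zero_apply, mul_eq_zero, h,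
        false_or] at h0
      ext i
      refine Fin.cases h0 hw i
    · rintro ⟨w, hw⟩
      have hx : A 0 0 * (-(∑ l, A 0 l.succ * w l) / A 0 0) + ∑ l, A 0 l.succ * w l = 0 := by
        field_simp; ring
      refine ⟨⟨Fin.cons (-(∑ l, A 0 l.succ * w l) / A 0 0) w, ?_⟩, ?_⟩
      · rw [LinearMap.mem_ker, mulVecLin_apply] at hw ⊢
        funext i
        rw [hA]
        refine Fin.cases ?_ (fun k => ?_) i
        · simpa using hx
        · have := hS _ w k hx
          rw [hw, Pi.zero_apply, eq_comm, mul_eq_zero] at this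
          simpa using this.resolve_left h
      · ext l
        rfl
  have h1 := (LinearEquiv.ofBijective T hT).finrank_eq
  have h2 := A.mulVecLin.finrank_range_add_finrank_ker
  have h3 := (schurComplement A).mulVecLin.finrank_range_add_finrank_ker
  simp only [Module.finrank_fintype_fun_eq_card, Fintype.card_fin] at h2 h3
  simp only [Matrix.rank]
  omega

/-- Row and column transpositions move the nonzero entry `A i j` to position `(0, 0)`; ranks are then
compared over the fraction field. -/
lemma adjugate_eq_zero_iff_schurComplement {m : ℕ} {D : Type*} [CommRing D] [IsDomain D]
    (A : Matrix (Fin (m + 2)) (Fin (m + 2)) D) (i j : Fin (m + 2)) (h : A i j ≠ 0) :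
    A.adjugate = 0 ↔
      (schurComplement (A.submatrix (Equiv.swap 0 i) (Equiv.swap 0 j))).adjugate = 0 := by
  let φ := algebraMap D (FractionRing D)
  have hφ : Function.Injective φ := IsFractionRing.injective D (FractionRing D)
  have key : ∀ {k : ℕ} (B : Matrix (Fin k) (Fin k) D),
      B.adjugate = 0 ↔ (B.map φ).adjugate = 0 := fun B => by
    have h := RingHom.map_adjugate φ B
    rw [RingHom.mapMatrix_apply, RingHom.mapMatrix_apply] at h
    rw [← h, ← Matrix.ext_iff, ← Matrix.ext_iff]
    simp [map_eq_zero_iff φ hφ]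
  set B := A.submatrix (Equiv.swap 0 i) (Equiv.swap 0 j) with hB
  have hrank : (A.map φ).rank = (B.map φ).rank := by
    rw [hB, ← submatrix_map, rank_submatrix]
  have hS : (schurComplement B).map φ = schurComplement (B.map φ) := by
    ext k l; simp [schurComplement]
  rw [key, key, hS, adjugate_eq_zero_iff_rank, adjugate_eq_zero_iff_rank, hrank,
    rank_eq_rank_schurComplement_add_one (B.map φ)]
  · simp only [Fintype.card_fin]; omega
  · simpa [hB, map_eq_zero_iff φ hφ] using h

/-! ### Minimal primes of the cofactor ideal have height at most four -/

/-- Induction step for the height bound when some entry of `M` is not in `P`: among the primes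
`Q ≤ P`, those containing the cofactor ideal of `M` are those containing the cofactor ideal of the
Schur complement at that entry, so `P` is minimal over the latter as well. -/
lemma height_le_four_of_entry_not_mem {m : ℕ} {R : Type*} [CommRing R]
    (ih : ∀ (N : Matrix (Fin (m + 1)) (Fin (m + 1)) R) (P : Ideal R),
      P ∈ (cofactorIdeal N).minimalPrimes → P.height ≤ 4)
    (M : Matrix (Fin (m + 2)) (Fin (m + 2)) R) (P : Ideal R)
    (hP : P ∈ (cofactorIdeal M).minimalPrimes) (i j : Fin (m + 2)) (hij : M i j ∉ P) :
    P.height ≤ 4 := by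
  set N := schurComplement (M.submatrix (Equiv.swap 0 i) (Equiv.swap 0 j)) with hN
  have key : ∀ Q : Ideal R, Q.IsPrime → Q ≤ P → (cofactorIdeal M ≤ Q ↔ cofactorIdeal N ≤ Q) := by
    intro Q hQ hQP
    rw [cofactorIdeal_le_iff, cofactorIdeal_le_iff,
      adjugate_eq_zero_iff_schurComplement (M.map (Ideal.Quotient.mk Q)) i j]
    · have : N.map (Ideal.Quotient.mk Q) = schurComplement
          ((M.map (Ideal.Quotient.mk Q)).submatrix (Equiv.swap 0 i) (Equiv.swap 0 j)) := by
        ext k l; simp [hN, schurComplement]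
      rw [this]
    · rw [map_apply, Ne, Ideal.Quotient.eq_zero_iff_mem]
      exact fun h => hij (hQP h)
  refine ih N P ⟨⟨hP.1.1, (key P hP.1.1 le_rfl).1 hP.1.2⟩, fun Q hQ hQP => ?_⟩
  exact hP.2 ⟨hQ.1, (key Q hQ.1 hQP).2 hQ.2⟩ hQP

/-- The matrix over `R[X]` obtained from `M` by adding `X` to its `(0, 0)` entry. -/
noncomputable def perturb {m : ℕ} {R : Type*} [CommRing R]
    (M : Matrix (Fin (m + 1)) (Fin (m + 1)) R) :
    Matrix (Fin (m + 1)) (Fin (m + 1)) (Polynomial R) :=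
  M.map Polynomial.C + diagonal (Pi.single 0 Polynomial.X)

/-- Modulo `P R[X]` the perturbed matrix has rank one, and its size is at least `3`, so its cofactors
lie in `P R[X]`. Setting `X = 0` shows that `P R[X] + (X)` is minimal over the cofactors of the
perturbed matrix together with `X`; by Krull's theorem a prime strictly below it that contains these
cofactors is minimal over them. -/
lemma map_C_mem_minimalPrimes_perturb {m : ℕ} {R : Type*} [CommRing R] [IsNoetherianRing R]
    (M : Matrix (Fin (m + 3)) (Fin (m + 3)) R) (P : Ideal R)
    (hP : P ∈ (cofactorIdeal M).minimalPrimes) (hM : ∀ i j, M i j ∈ P) :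
    P.map Polynomial.C ∈ (cofactorIdeal (perturb M)).minimalPrimes := by
  have hPp : P.IsPrime := hP.1.1
  have hP'p : (P.map (Polynomial.C : R →+* Polynomial R)).IsPrime := Ideal.isPrime_map_C_of_isPrime
  have hle : cofactorIdeal (perturb M) ≤ P.map Polynomial.C := by
    rw [cofactorIdeal_le_iff]
    have : (perturb M).map (Ideal.Quotient.mk (P.map Polynomial.C)) =
        diagonal (Pi.single 0 (Ideal.Quotient.mk (P.map Polynomial.C) Polynomial.X)) := by
      ext i j
      have : Ideal.Quotient.mk (P.map Polynomial.C) (Polynomial.C (M i j)) = 0 :=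
        Ideal.Quotient.eq_zero_iff_mem.2 (Ideal.mem_map_of_mem _ (hM i j))
      rw [map_apply, perturb, Matrix.add_apply, map_apply, map_add, this, zero_add]
      by_cases h : i = j
      · subst h
        by_cases h0 : i = 0
        · subst h0; simp
        · simp [h0]
      · simp [diagonal_apply_ne _ h]
    rw [this, adjugate_diagonal, diagonal_eq_zero]
    funext i
    -- one of the indices `1, 2` is different from `i`
    obtain ⟨j, hji, hj0⟩ : ∃ j : Fin (m + 3), j ≠ i ∧ j ≠ 0 := by
      by_cases h : i = ⟨1, by omega⟩
      · exact ⟨⟨2, by omega⟩, by simp [h], by simp [Fin.ext_iff]⟩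
      · exact ⟨⟨1, by omega⟩, Ne.symm h, by simp⟩
    exact Finset.prod_eq_zero (Finset.mem_erase.2 ⟨hji, Finset.mem_univ j⟩) (by simp [hj0])
  -- `T` is the ideal `P R[X] + (X)`
  set T : Ideal (Polynomial R) := P.comap (Polynomial.evalRingHom 0) with hT
  have hTp : T.IsPrime := inferInstance
  have hXT : Polynomial.X ∈ T := by simp [hT, Ideal.mem_comap]
  have hPT : P.map Polynomial.C ≤ T := by
    rw [Ideal.map_le_iff_le_comap]
    intro r hr
    simpa [hT, Ideal.mem_comap] using hr
  have hX : Polynomial.X ∉ P.map (Polynomial.C : R →+* Polynomial R) := fun h => by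
    have := Ideal.mem_map_C_iff.1 h 1
    rw [Polynomial.coeff_X_one] at this
    exact hPp.ne_top ((Ideal.eq_top_iff_one _).2 this)
  have hlt : P.map Polynomial.C < T := lt_of_le_of_ne hPT fun h => hX (h ▸ hXT)
  have hTmin : T ∈ (Ideal.span (insert Polynomial.X
      (cofactorIdeal (perturb M) : Set (Polynomial R)))).minimalPrimes := by
    refine ⟨⟨hTp, ?_⟩, fun T₀ hT₀ hle₀ => ?_⟩
    · rw [Ideal.span_le, Set.insert_subset_iff]
      exact ⟨hXT, hle.trans hPT⟩
    · obtain ⟨hT₀p, hT₀⟩ := hT₀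
      rw [Ideal.span_le, Set.insert_subset_iff] at hT₀
      have hX0 : Polynomial.X ∈ T₀ := hT₀.1
      have hC : cofactorIdeal M ≤ T₀.comap Polynomial.C := by
        have h := (cofactorIdeal_le_iff _ _).1 hT₀.2
        rw [cofactorIdeal_le_comap_iff]
        convert h using 2
        ext i j
        have h0 : Ideal.Quotient.mk T₀ Polynomial.X = 0 := Ideal.Quotient.eq_zero_iff_mem.2 hX0
        by_cases h : i = j
        · subst h
          by_cases h1 : i = 0
          · subst h1; simp [perturb, h0]
          · simp [perturb, h1]
        · simp [perturb, diagonal_apply_ne _ h]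
      have hCP : T₀.comap Polynomial.C ≤ P := fun r hr => by
        have := hle₀ (Ideal.mem_comap.1 hr)
        simpa [hT, Ideal.mem_comap] using this
      have hPC : P ≤ T₀.comap Polynomial.C := hP.2 ⟨inferInstance, hC⟩ hCP
      intro p hp
      rw [← Polynomial.divX_mul_X_add p]
      refine T₀.add_mem (T₀.mul_mem_left _ hX0) (hPC ?_)
      simpa [hT, Ideal.mem_comap, Polynomial.coeff_zero_eq_eval_zero] using hp
  have := Ideal.mem_minimalPrimes_span_of_mem_minimalPrimes_span_insert hlt Polynomial.X _ hTmin
    (cofactorIdeal (perturb M)) hle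
    fun x hx => Ideal.le_radical (Ideal.subset_span (Set.mem_insert_of_mem _ hx))
  rwa [Ideal.span_eq] at this

lemma height_le_height_map_C {R : Type*} [CommRing R] [IsNoetherianRing R] (P : Ideal R)
    [P.IsPrime] : P.height ≤ (P.map (Polynomial.C : R →+* Polynomial R)).height := by
  have hP'p : (P.map (Polynomial.C : R →+* Polynomial R)).IsPrime := Ideal.isPrime_map_C_of_isPrime
  have : (P.map (Polynomial.C : R →+* Polynomial R)).LiesOver P := ⟨by
    ext r
    rw [Ideal.under_def, Ideal.mem_comap, Polynomial.algebraMap_eq, Ideal.mem_map_C_iff]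
    refine ⟨fun hr n => ?_, fun h => by simpa using h 0⟩
    rw [Polynomial.coeff_C]
    split_ifs
    exacts [hr, P.zero_mem]⟩
  rw [Ideal.height_eq_height_add_of_liesOver_of_hasGoingDown P (P.map Polynomial.C)]
  exact le_self_add

/-- The case `r = m - 1` of the classical bound `(m + 1 - r)²` on the codimension of the locus where a
matrix of size `m + 1` has rank at most `r`. The ring varies in the induction, which passes from `R`
to `R[X]`. -/
theorem height_le_four_of_mem_minimalPrimes_cofactorIdeal (m : ℕ) :
    ∀ {R : Type*} [CommRing R] [IsNoetherianRing R]
      (M : Matrix (Fin (m + 1)) (Fin (m + 1)) R) (P : Ideal R),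
      P ∈ (cofactorIdeal M).minimalPrimes → P.height ≤ 4 := by
  induction m with
  | zero =>
    -- the adjugate of a matrix of size one is the identity, so there is no minimal prime
    intro R _ _ M P hP
    refine absurd ((Ideal.eq_top_iff_one _).2 ?_) hP.1.1.ne_top
    refine hP.1.2 (Ideal.subset_span ⟨(0, 0), ?_⟩)
    change M.adjugate 0 0 = 1
    rw [adjugate_eq_one_of_card_eq_one (A := M) (by simp), one_apply_eq]
  | succ m ih =>
    intro R _ _ M P hP
    have hPp : P.IsPrime := hP.1.1
    by_cases hM : ∀ i j, M i j ∈ P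
    · rcases m with _ | m
      · refine (Ideal.height_le_card_of_mem_minimalPrimes_span (Set.finite_range _) hP).trans ?_
        have : (Set.range fun p : Fin (0 + 1 + 1) × Fin (0 + 1 + 1) =>
            M.adjugate p.1 p.2).ncard ≤ 4 := by
          rw [← Set.image_univ]
          exact (Set.ncard_image_le Set.finite_univ).trans (by simp [Set.ncard_univ])
        exact_mod_cast this
      · refine (height_le_height_map_C P).trans ?_
        refine height_le_four_of_entry_not_mem (fun N Q hQ => ih N Q hQ) (perturb M) _
          (map_C_mem_minimalPrimes_perturb M P hP hM) 0 0 fun h => ?_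
        have := Ideal.mem_map_C_iff.1 h 1
        simp only [perturb, Matrix.add_apply, map_apply, diagonal_apply_eq, Pi.single_eq_same,
          Polynomial.coeff_add, Polynomial.coeff_X_one] at this
        rw [Polynomial.coeff_C_of_ne_zero one_ne_zero, zero_add] at this
        exact hPp.ne_top ((Ideal.eq_top_iff_one _).2 this)
    · push Not at hM
      obtain ⟨i, j, hij⟩ := hM
      exact height_le_four_of_entry_not_mem (fun N Q hQ => ih N Q hQ) M P hP i j hij

/-! ### Heights and dimensions in polynomial rings -/

lemma height_eq_of_isMaximal_mvPolynomial {F : Type*} [Field F] (n : ℕ)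
    (m : Ideal (MvPolynomial (Fin n) F)) [m.IsMaximal] : m.height = n := by
  induction n with
  | zero =>
    have hb : IsField (MvPolynomial (Fin 0) F) :=
      (MvPolynomial.isEmptyRingEquiv F (Fin 0)).toMulEquiv.isField (Field.toIsField F)
    let _ := hb.toField
    have : m = ⊥ := (Ideal.eq_bot_or_top m).resolve_right (Ideal.IsMaximal.ne_top ‹_›)
    rw [this, Ideal.height_bot, Nat.cast_zero]
  | succ n ih =>
    let e := (MvPolynomial.finSuccEquiv F n).toRingEquiv
    have h1 : (m.map e).IsMaximal := Ideal.map_isMaximal_of_equiv e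
    let p : Ideal (MvPolynomial (Fin n) F) := (m.map e).comap Polynomial.C
    have h2 : p.IsMaximal := Polynomial.isMaximal_comap_C_of_isJacobsonRing (m.map e)
    have h3 : (m.map e).LiesOver p := ⟨rfl⟩
    rw [← e.height_map m, Polynomial.height_eq_height_add_one p (m.map e), ih p]
    push_cast; rfl

/-- The nontrivial half of the dimension formula `ht P + dim F[x₁,…,xₙ]/P = n`. -/
lemma le_height_add_ringKrullDim_quotient {F : Type*} [Field F] {n : ℕ}
    (P : Ideal (MvPolynomial (Fin n) F)) [hP : P.IsPrime] :
    (n : WithBot ℕ∞) ≤ P.height + ringKrullDim (MvPolynomial (Fin n) F ⧸ P) := by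
  classical
  set R := MvPolynomial (Fin n) F
  obtain ⟨s, hs, hcard⟩ := P.exists_finset_card_eq_height_of_isNoetherianRing
  set I : Ideal R := Ideal.span s
  have hfin := I.finite_minimalPrimes_of_isNoetherianRing R
  -- `g` separates `P` from the other minimal primes of `I`
  obtain ⟨g, hgP, hg⟩ : ∃ g ∉ P, ∀ Q ∈ I.minimalPrimes, Q ≠ P → g ∈ Q := by
    have : ∀ Q ∈ I.minimalPrimes, ∃ g ∉ P, Q ≠ P → g ∈ Q := fun Q hQ => by
      by_cases h : Q = P
      · exact ⟨1, fun h1 => hP.ne_top ((Ideal.eq_top_iff_one _).2 h1), fun h' => absurd h h'⟩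
      · obtain ⟨g, hgQ, hgP⟩ := SetLike.not_le_iff_exists.1
          fun hle => h (le_antisymm hle (hs.2 hQ.1 hle))
        exact ⟨g, hgP, fun _ => hgQ⟩
    choose! g hgP hgQ using this
    refine ⟨∏ Q ∈ hfin.toFinset, g Q, fun h => ?_, fun Q hQ hne => ?_⟩
    · obtain ⟨Q, hQ, hgQ⟩ := hP.prod_mem_iff.1 h
      exact hgP Q (hfin.mem_toFinset.1 hQ) hgQ
    · exact Ideal.mem_of_dvd _ (Finset.dvd_prod_of_mem _ (hfin.mem_toFinset.2 hQ)) (hgQ Q hQ hne)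
  -- `P` is an intersection of maximal ideals, as polynomial rings over fields are Jacobson
  obtain ⟨m, hm, hPm, hgm⟩ : ∃ m : Ideal R, m.IsMaximal ∧ P ≤ m ∧ g ∉ m := by
    by_contra! H
    refine hgP ?_
    rw [← (isJacobsonRing_iff_prime_eq.1 inferInstance P hP : P.jacobson = P)]
    exact Ideal.mem_sInf.2 fun {J} hJ => H J hJ.2 hJ.1
  have hIm : I ≤ m := hs.1.2.trans hPm
  have h1 : m.height ≤ (m.map (Ideal.Quotient.mk I)).height + P.height := by
    refine (Ideal.height_le_height_add_spanFinrank_of_le hIm).trans ?_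
    gcongr
    rw [← hcard]
    exact_mod_cast Submodule.spanFinrank_span_le_ncard_of_finite s.finite_toSet |>.trans (by simp)
  rw [height_eq_of_isMaximal_mvPolynomial] at h1
  have hprime : (m.map (Ideal.Quotient.mk I)).IsPrime :=
    Ideal.isPrime_map_quotientMk_of_isPrime hIm
  have h2 : ((m.map (Ideal.Quotient.mk I)).height : WithBot ℕ∞) ≤ ringKrullDim (R ⧸ P) := by
    rw [PrimeSpectrum.height_eq_orderHeight ⟨_, hprime⟩, Order.height_eq_krullDim_Iic,
      ringKrullDim_quotient]
    -- `P` is the only minimal prime of `I` below `m`, so primes between `I` and `m` contain `P`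
    refine Order.krullDim_le_of_strictMono
      (fun q => ⟨PrimeSpectrum.comap (Ideal.Quotient.mk I) q.1, ?_⟩) ?_
    · have hqI : I ≤ q.1.asIdeal.comap (Ideal.Quotient.mk I) := fun x hx => by
        rw [Ideal.mem_comap, Ideal.Quotient.eq_zero_iff_mem.2 hx]
        exact Ideal.zero_mem _
      have hqm : q.1.asIdeal.comap (Ideal.Quotient.mk I) ≤ m := by
        refine (Ideal.comap_mono q.2).trans ?_
        change (m.map (Ideal.Quotient.mk I)).comap (Ideal.Quotient.mk I) ≤ m
        rw [Ideal.comap_map_of_surjective _ Ideal.Quotient.mk_surjective, ← RingHom.ker_eq_comap_bot,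
          Ideal.mk_ker]
        exact sup_le le_rfl hIm
      obtain ⟨Q, hQ, hQq⟩ := Ideal.exists_minimalPrimes_le hqI
      have : Q = P := by_contra fun hne => hgm (hqm (hQq (hg Q hQ hne)))
      exact this ▸ hQq
    · intro q q' hlt
      refine lt_of_le_of_ne (Ideal.comap_mono hlt.le) fun h => hlt.ne ?_
      have h' := congrArg Subtype.val h
      exact Subtype.ext (PrimeSpectrum.comap_injective_of_surjective _
        Ideal.Quotient.mk_surjective h')
  calc (n : WithBot ℕ∞) ≤ ((m.map (Ideal.Quotient.mk I)).height : WithBot ℕ∞) + P.height := by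
        exact_mod_cast h1
    _ ≤ ringKrullDim (R ⧸ P) + P.height := by gcongr
    _ = _ := add_comm _ _

/-! ### Regularity of determinantal representations -/

/-- Let `F` be an algebraically closed field and `f` a polynomial with zero constant term
whose singular locus (the variety of the ideal generated by `f` and its first-order partial
derivatives) has dimension strictly less than `n - 4`. Then every determinantal
representation of `f` of size `s` is regular: the constant part has rank exactly `s - 1`. -/
theorem determinantal_representation_is_regular_of_small_singular_locus
    {F : Type*} [Field F] [IsAlgClosed F] {n s : ℕ}
    (f : MvPolynomial (Fin n) F)
    (hconst : MvPolynomial.coeff 0 f = 0)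
    (hsing : ringKrullDim (MvPolynomial (Fin n) F ⧸
        Ideal.span ({f} ∪ Set.range (fun i : Fin n => MvPolynomial.pderiv i f))) + 4
      < (n : WithBot ℕ∞))
    (M : Matrix (Fin s) (Fin s) (MvPolynomial (Fin n) F))
    (hdeg : ∀ i j, (M i j).totalDegree ≤ 1)
    (hdet : M.det = f) :
    (Matrix.of fun i j => MvPolynomial.coeff 0 (M i j)).rank = s - 1 := by
  set M₀ := Matrix.of fun i j => MvPolynomial.coeff 0 (M i j) with hM₀
  have hM₀' : M₀ = M.map MvPolynomial.constantCoeff := by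
    ext i j; simp [hM₀, MvPolynomial.constantCoeff_eq]
  have hdet₀ : M₀.det = 0 := by
    rw [hM₀', ← RingHom.mapMatrix_apply, ← RingHom.map_det, hdet, MvPolynomial.constantCoeff_eq,
      hconst]
  rcases s with _ | s
  · simp at hdet₀
  have hle : M₀.rank ≤ s + 1 := M₀.rank_le_width
  have hne : M₀.rank ≠ s + 1 := fun h => by
    obtain ⟨v, hv, hv0⟩ := Matrix.exists_mulVec_eq_zero_iff.2 hdet₀
    have h1 := M₀.mulVecLin.finrank_range_add_finrank_ker
    rw [Module.finrank_fintype_fun_eq_card, Fintype.card_fin] at h1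
    change Module.finrank F (LinearMap.range M₀.mulVecLin) = s + 1 at h
    have h2 : LinearMap.ker M₀.mulVecLin = ⊥ := Submodule.finrank_eq_zero.1 (by omega)
    exact hv ((LinearMap.ker_eq_bot'.1 h2) v hv0)
  by_contra hrank
  have hadj : M₀.adjugate = 0 := by
    rw [adjugate_eq_zero_iff_rank, Fintype.card_fin]
    omega
  have hker : cofactorIdeal M ≤ RingHom.ker (MvPolynomial.constantCoeff (σ := Fin n) (R := F)) := by
    rw [cofactorIdeal, Ideal.span_le, Set.range_subset_iff]
    intro p
    have h := RingHom.map_adjugate MvPolynomial.constantCoeff M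
    rw [RingHom.mapMatrix_apply, RingHom.mapMatrix_apply, ← hM₀', hadj] at h
    exact congrFun (congrFun h p.1) p.2
  have : (RingHom.ker (MvPolynomial.constantCoeff (σ := Fin n) (R := F))).IsPrime :=
    RingHom.ker_isPrime _
  obtain ⟨P, hP, -⟩ := Ideal.exists_minimalPrimes_le hker
  have hPp : P.IsPrime := hP.1.1
  have hJ : Ideal.span ({f} ∪ Set.range (fun i : Fin n => MvPolynomial.pderiv i f)) ≤ P := by
    refine le_trans ?_ hP.1.2
    rw [Ideal.span_le, Set.union_subset_iff, Set.singleton_subset_iff, Set.range_subset_iff, ← hdet]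
    exact ⟨det_mem_cofactorIdeal M, fun i => derivation_det_mem_cofactorIdeal _ M⟩
  have h4 : (P.height : WithBot ℕ∞) ≤ 4 :=
    WithBot.coe_le_coe.2 <| height_le_four_of_mem_minimalPrimes_cofactorIdeal s M P hP
  refine hsing.not_ge ((le_height_add_ringKrullDim_quotient P).trans ?_)
  rw [add_comm]
  exact add_le_add (ringKrullDim_le_of_surjective (Ideal.Quotient.factor hJ)
    (Ideal.Quotient.factor_surjective hJ)) h4
end

section
/- Let F be a field, let f ∈ F[x₁,…,xₙ] be a homogeneous polynomial of degree d ≥ 2, and let M be a determinantal representation of f of size s whose constant part M(0) has rank s−r. Then r ≥ 1, and if moreover r < s, there exist matrices A of size r×r, B of size r×(s−r), C of size (s−r)×r, and D of size (s−r)×(s−r), all of whose entries are homogeneous linear forms in x₁,…,xₙ, such that the determinant of the block matrix [[A, B], [C, I−D]] (where I is the (s−r)×(s−r) identity matrix) equals f. -/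
/-!
The constant part `M₀ = M(0)` satisfies `det M₀ = f(0) = 0` because `f` is homogeneous of positive
degree, so `M₀` is singular and `r ≥ 1`. By Gaussian elimination there are invertible scalar
matrices `V`, `U` with `V M₀ U = diag(0, I)`. Since the zero block is nonempty, one of its rows can
be rescaled without changing `diag(0, I)`, so one may assume `det V * det U = 1`
(`exists_unimodular_rank_normal_form`). Then `V M U` still has determinant `f` and entries of degree
at most one, and its constant part is `diag(0, I)`; hence its blocks are `A`, `B`, `C` and `I - D`
with `A`, `B`, `C`, `D` free of constant terms, i.e. made of linear forms.
-/

open MvPolynomial Matrix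

/-- Rank normal form of a singular square matrix, with the transforming matrices chosen so that
they preserve determinants: the corank `r` is positive, so a row of the zero block can absorb any
scalar. -/
theorem exists_unimodular_rank_normal_form {F : Type*} [Field F] {s r : ℕ} (hr : 1 ≤ r)
    (hrs : r ≤ s) (M : Matrix (Fin s) (Fin s) F) (hM : M.rank = s - r) :
    ∃ (V U : Matrix (Fin s) (Fin s) F) (e : Fin s ≃ Fin r ⊕ Fin (s - r)),
      V.det * U.det = 1 ∧ V * M * U = (fromBlocks 0 0 0 1).submatrix e e := by
  obtain ⟨V, U, e, hV, hU, h⟩ := M.exists_rank_normal_form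
  have hV0 : V.det ≠ 0 := ((isUnit_iff_isUnit_det _).1 hV).ne_zero
  have hU0 : U.det ≠ 0 := ((isUnit_iff_isUnit_det _).1 hU).ne_zero
  have hr' : Fintype.card (Fin s) - M.rank = r := by rw [hM, Fintype.card_fin]; omega
  let e₁ : Fin s ≃ Fin r ⊕ Fin (s - r) :=
    e.trans ((Equiv.sumComm _ _).trans (Equiv.sumCongr (finCongr hr') (finCongr hM)))
  have h₁ : V * M * U = (fromBlocks 0 0 0 1).submatrix e₁ e₁ := by
    rw [h]
    ext i j
    rcases hi : e i with a | a <;> rcases hj : e j with b | b <;>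
      simp [e₁, hi, hj, Matrix.one_apply]
  let i₀ : Fin s := e₁.symm (Sum.inl ⟨0, hr⟩)
  let w : Fin s → F := Function.update 1 i₀ (V.det * U.det)⁻¹
  refine ⟨diagonal w * V, U, e₁, ?_, ?_⟩
  · have hw : ∏ i, w i = (V.det * U.det)⁻¹ := by
      simp [w, Finset.prod_update_of_mem]
    rw [det_mul, det_diagonal, hw]
    field_simp
  · rw [Matrix.mul_assoc, Matrix.mul_assoc, ← Matrix.mul_assoc V, h₁]
    ext i j
    rw [diagonal_mul]
    by_cases hi : i = i₀
    · subst hi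
      rcases hj : e₁ j with b | b <;> simp [i₀, hj]
    · simp [w, hi]

theorem isHomogeneous_one_of_totalDegree_le {F : Type*} [Field F] {n : ℕ}
    {p : MvPolynomial (Fin n) F} (hp : p.totalDegree ≤ 1) (h0 : constantCoeff p = 0) :
    p.IsHomogeneous 1 := by
  intro m hm
  have h1 : m.degree ≤ 1 := (le_totalDegree (mem_support_iff.2 hm)).trans hp
  have h2 : m.degree ≠ 0 := by
    intro h
    rw [Finsupp.degree_eq_zero_iff] at h
    subst h
    exact hm h0
  change Finsupp.weight (fun _ => 1) m = 1
  rw [← Finsupp.degree_eq_weight_one]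
  omega

theorem totalDegree_mul_mul_C_le {F : Type*} [Field F] {n s : ℕ}
    {M : Matrix (Fin s) (Fin s) (MvPolynomial (Fin n) F)}
    (hM : ∀ i j, (M i j).totalDegree ≤ 1) (V U : Matrix (Fin s) (Fin s) F) (i j : Fin s) :
    ((V.map C * M * U.map C : Matrix _ _ (MvPolynomial (Fin n) F)) i j).totalDegree ≤ 1 := by
  simp only [Matrix.mul_apply]
  refine totalDegree_finsetSum_le fun k _ => (totalDegree_mul _ _).trans ?_
  simp only [Matrix.map_apply, totalDegree_C, add_zero]
  refine totalDegree_finsetSum_le fun l _ => (totalDegree_mul _ _).trans ?_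
  simpa using hM l k

/-- Normal form for determinantal representations: if `f` is homogeneous of degree `d ≥ 2`
and `M` is a size-`s` determinantal representation of `f` whose constant part has rank
`s - r`, then `r ≥ 1`, and if `r < s` then `f` is also the determinant of a block matrix
`[[A, B], [C, I - D]]` where `A, B, C, D` are matrices of homogeneous linear forms. -/
theorem determinantal_normal_form
    {F : Type*} [Field F] {n d s r : ℕ} (hd : 2 ≤ d)
    (f : MvPolynomial (Fin n) F) (hf : f.IsHomogeneous d)
    (M : Matrix (Fin s) (Fin s) (MvPolynomial (Fin n) F))
    (hdeg : ∀ i j, (M i j).totalDegree ≤ 1)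
    (hdet : M.det = f)
    (hrs : r ≤ s)
    (hrank : (Matrix.of fun i j => MvPolynomial.coeff 0 (M i j)).rank = s - r) :
    1 ≤ r ∧
    (r < s →
      ∃ (A : Matrix (Fin r) (Fin r) (MvPolynomial (Fin n) F))
        (B : Matrix (Fin r) (Fin (s-r)) (MvPolynomial (Fin n) F))
        (C : Matrix (Fin (s-r)) (Fin r) (MvPolynomial (Fin n) F))
        (D : Matrix (Fin (s-r)) (Fin (s-r)) (MvPolynomial (Fin n) F)),
        (∀ i j, (A i j).IsHomogeneous 1) ∧ (∀ i j, (B i j).IsHomogeneous 1) ∧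
        (∀ i j, (C i j).IsHomogeneous 1) ∧ (∀ i j, (D i j).IsHomogeneous 1) ∧
        (Matrix.fromBlocks A B C (1 - D)).det = f) := by
  have hM₀ : (Matrix.of fun i j => MvPolynomial.coeff 0 (M i j)) = M.map constantCoeff := rfl
  rw [hM₀] at hrank
  have hr : 1 ≤ r := by
    by_contra! hr0
    obtain rfl : r = 0 := by omega
    have hdet₀ : (M.map (constantCoeff (R := F))).det = 0 := by
      have hmap := RingHom.map_det (constantCoeff (σ := Fin n) (R := F)) M
      rw [RingHom.mapMatrix_apply] at hmap
      rw [← hmap, hdet]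
      exact hf.coeff_eq_zero (by simp; omega)
    have hli : LinearIndependent F (M.map (constantCoeff (R := F))).col := by
      rw [linearIndependent_iff_card_eq_finrank_span, Set.finrank, ← rank_eq_finrank_span_cols,
        hrank]
      simp
    exact ((isUnit_iff_isUnit_det _).1 (linearIndependent_cols_iff_isUnit.1 hli)).ne_zero hdet₀
  refine ⟨hr, fun _ => ?_⟩
  obtain ⟨V, U, e, hVU, hnf⟩ := exists_unimodular_rank_normal_form hr hrs _ hrank
  let N := V.map (C (σ := Fin n)) * M * U.map C
  have hNdet : N.det = f := by
    have hC (W : Matrix (Fin s) (Fin s) F) : (W.map (C (σ := Fin n))).det = C W.det :=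
      (RingHom.map_det (C (σ := Fin n)) W).symm
    rw [det_mul, det_mul, hC, hC, hdet, mul_right_comm, ← C_mul, hVU, C_1, one_mul]
  have hN₀ : N.map constantCoeff = (fromBlocks 0 0 0 1).submatrix e e := by
    rw [← hnf]
    simp only [N, Matrix.map_mul, Matrix.map_map]
    congr <;> ext <;> simp
  let N' := N.submatrix e.symm e.symm
  have hN'deg (i j) : (N' i j).totalDegree ≤ 1 := totalDegree_mul_mul_C_le hdeg V U _ _
  have hN'₀ (i j) : constantCoeff (N' i j) =
      (fromBlocks 0 0 0 1 : Matrix (Fin r ⊕ Fin (s - r)) (Fin r ⊕ Fin (s - r)) F) i j := by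
    simpa [N'] using congrFun (congrFun hN₀ (e.symm i)) (e.symm j)
  refine ⟨N'.toBlocks₁₁, N'.toBlocks₁₂, N'.toBlocks₂₁, 1 - N'.toBlocks₂₂, fun i j => ?_,
    fun i j => ?_, fun i j => ?_, fun i j => ?_, ?_⟩
  · exact isHomogeneous_one_of_totalDegree_le (hN'deg _ _) (hN'₀ _ _)
  · exact isHomogeneous_one_of_totalDegree_le (hN'deg _ _) (hN'₀ _ _)
  · exact isHomogeneous_one_of_totalDegree_le (hN'deg _ _) (hN'₀ _ _)
  · refine isHomogeneous_one_of_totalDegree_le ((totalDegree_sub _ _).trans (max_le ?_ ?_)) ?_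
    · rw [Matrix.one_apply]
      split_ifs <;> simp
    · exact hN'deg _ _
    · have h := hN'₀ (Sum.inr i) (Sum.inr j)
      rw [fromBlocks_apply₂₂] at h
      rw [Matrix.sub_apply, map_sub, toBlocks₂₂, of_apply, h, Matrix.one_apply, Matrix.one_apply]
      split_ifs <;> simp
  · rw [sub_sub_cancel, fromBlocks_toBlocks, det_submatrix_equiv_self, hNdet]
end

section
/- Let F be a field, let f ∈ F[x₁,…,xₙ] be a homogeneous polynomial of degree d ≥ 2, let 1 ≤ r < s, and let A (r×r), B (r×(s−r)), C ((s−r)×r), D ((s−r)×(s−r)) be matrices whose entries are homogeneous linear forms in x₁,…,xₙ such that the determinant of the block matrix [[A, B], [C, I−D]] equals f. Define the r×r polynomial matrix W = A − ∑_{i=0}^{d−2} B Dⁱ C. Then the homogeneous component of det(W) of degree e is 0 for every e < d, and the homogeneous component of det(W) of degree d equals f. -/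
/-!
Let `m` be the ideal generated by the variables. Modulo `m ^ (d + 1)` the matrix `D` is nilpotent,
so `1 - D` has the inverse `E = ∑_{i ≤ d} D ^ i`, and the Schur complement formula reads
`f * det E ≡ det (A - B E C)`. The products `B D ^ i C` with `i ≥ d - 1` have entries of degree at
least `d + 1`, so `A - B E C ≡ W`. Finally `det E` has constant coefficient `1` and `f ∈ m ^ d`,
hence `f * det E ≡ f`. Thus `det W ≡ f` modulo `m ^ (d + 1)`, which determines all homogeneous
components of `det W` of degree at most `d`.
-/

open MvPolynomial Matrix

/-- The Schur complement formula for a block `1 - D` with `D` nilpotent, where the inverse of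
`1 - D` is the finite geometric sum of the powers of `D`. -/
lemma det_fromBlocks_mul_det_geom_sum {R ι κ : Type*} [CommRing R] [Fintype ι] [Fintype κ]
    [DecidableEq ι] [DecidableEq κ] (A : Matrix ι ι R) (B : Matrix ι κ R) (C : Matrix κ ι R)
    (D : Matrix κ κ R) (k : ℕ) (hD : D ^ k = 0) :
    (fromBlocks A B C (1 - D)).det * (∑ i ∈ Finset.range k, D ^ i).det =
      (A - ∑ i ∈ Finset.range k, B * D ^ i * C).det := by
  set E := ∑ i ∈ Finset.range k, D ^ i with hE
  have hinv : (1 - D) * E = 1 := by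
    rw [hE, mul_neg_geom_sum, hD, sub_zero]
  have hsum : ∑ i ∈ Finset.range k, B * D ^ i * C = B * E * C := by
    rw [hE, Matrix.mul_sum, Matrix.sum_mul]
  have hE' : E.det = (fromBlocks (1 : Matrix ι ι R) 0 (-(E * C)) E).det := by
    rw [det_fromBlocks_zero₁₂, det_one, one_mul]
  rw [hE', ← det_mul, fromBlocks_multiply, hsum]
  have h0 : C * (1 : Matrix ι ι R) + (1 - D) * -(E * C) = 0 := by
    rw [Matrix.mul_neg, ← Matrix.mul_assoc, hinv]; simp
  rw [h0, det_fromBlocks_zero₂₁]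
  simp [hinv, ← sub_eq_add_neg, Matrix.mul_assoc]

lemma mul_apply_isHomogeneous {F σ ι κ τ : Type*} [CommRing F] [Fintype κ]
    {M : Matrix ι κ (MvPolynomial σ F)} {N : Matrix κ τ (MvPolynomial σ F)} {a b : ℕ}
    (hM : ∀ i j, (M i j).IsHomogeneous a) (hN : ∀ i j, (N i j).IsHomogeneous b) (i : ι) (j : τ) :
    ((M * N) i j).IsHomogeneous (a + b) := by
  rw [Matrix.mul_apply]
  exact IsHomogeneous.sum _ _ _ fun l _ => (hM i l).mul (hN l j)

lemma pow_apply_isHomogeneous {F σ κ : Type*} [CommRing F] [Fintype κ] [DecidableEq κ]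
    {D : Matrix κ κ (MvPolynomial σ F)} (hD : ∀ i j, (D i j).IsHomogeneous 1) (k : ℕ) (i j : κ) :
    ((D ^ k) i j).IsHomogeneous k := by
  induction k generalizing i j with
  | zero =>
    rw [pow_zero, Matrix.one_apply]
    split_ifs
    · exact isHomogeneous_one _ _
    · exact isHomogeneous_zero _ _ _
  | succ k ih =>
    rw [pow_succ]
    exact mul_apply_isHomogeneous ih hD i j

lemma isHomogeneous_mem_pow_idealOfVars {F σ : Type*} [CommRing F] {p : MvPolynomial σ F}
    {a k : ℕ} (hp : p.IsHomogeneous a) (hk : k ≤ a) : p ∈ idealOfVars σ F ^ k := by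
  rw [mem_pow_idealOfVars_iff]
  intro x hx
  have hdeg : Finsupp.degree x = a := by
    rw [Finsupp.degree_eq_weight_one]
    exact hp (mem_support_iff.1 hx)
  omega

/-- The geometric sum of the powers of `D` has determinant `1` modulo the variables, because it
reduces to the identity matrix: `D ^ 0 = 1` is its only term with nonzero constant coefficients. -/
lemma det_geom_sum_sub_one_mem {F σ κ : Type*} [CommRing F] [Fintype κ] [DecidableEq κ]
    {D : Matrix κ κ (MvPolynomial σ F)} (hD : ∀ i j, (D i j).IsHomogeneous 1) (k : ℕ) :
    (∑ i ∈ Finset.range (k + 1), D ^ i).det - 1 ∈ idealOfVars σ F := by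
  have hD0 : (constantCoeff (σ := σ) (R := F)).mapMatrix D = 0 := by
    ext i j
    simpa [constantCoeff_eq] using (hD i j).coeff_eq_zero (d := 0) (by simp)
  have h1 : constantCoeff (∑ i ∈ Finset.range (k + 1), D ^ i).det = 1 := by
    rw [RingHom.map_det, map_sum, Finset.sum_range_succ']
    simp [map_pow, hD0]
  rw [← pow_one (idealOfVars σ F), mem_pow_idealOfVars_iff']
  intro x hx
  obtain rfl : x = 0 := by
    rw [← Finsupp.degree_eq_zero_iff]; omega
  rw [← constantCoeff_eq, map_sub, h1, map_one, sub_self]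

/-- If `f` is homogeneous of degree `d ≥ 2` and equals the determinant of the block matrix
`[[A, B], [C, I - D]]` with `A, B, C, D` matrices of homogeneous linear forms, then for
`W = A - ∑_{i=0}^{d-2} B Dⁱ C`, all homogeneous components of `det W` of degree `< d`
vanish, and the homogeneous component of `det W` of degree `d` equals `f`. -/
theorem truncated_schur_complement_components
    {F : Type*} [Field F] {n d s r : ℕ} (hd : 2 ≤ d) (hr : 1 ≤ r) (hrs : r < s)
    (f : MvPolynomial (Fin n) F) (hf : f.IsHomogeneous d)
    (A : Matrix (Fin r) (Fin r) (MvPolynomial (Fin n) F))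
    (B : Matrix (Fin r) (Fin (s-r)) (MvPolynomial (Fin n) F))
    (C : Matrix (Fin (s-r)) (Fin r) (MvPolynomial (Fin n) F))
    (D : Matrix (Fin (s-r)) (Fin (s-r)) (MvPolynomial (Fin n) F))
    (hA : ∀ i j, (A i j).IsHomogeneous 1) (hB : ∀ i j, (B i j).IsHomogeneous 1)
    (hC : ∀ i j, (C i j).IsHomogeneous 1) (hD : ∀ i j, (D i j).IsHomogeneous 1)
    (hdet : (Matrix.fromBlocks A B C (1 - D)).det = f) :
    (∀ e : ℕ, e < d →
      MvPolynomial.homogeneousComponent e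
        ((A - ∑ i ∈ Finset.range (d-1), B * D ^ i * C).det) = 0) ∧
    MvPolynomial.homogeneousComponent d
      ((A - ∑ i ∈ Finset.range (d-1), B * D ^ i * C).det) = f := by
  set W := A - ∑ i ∈ Finset.range (d-1), B * D ^ i * C with hW
  let I := idealOfVars (Fin n) F ^ (d + 1)
  let φ := Ideal.Quotient.mk I
  have hφ : ∀ {p : MvPolynomial (Fin n) F} {a : ℕ}, p.IsHomogeneous a → d + 1 ≤ a → φ p = 0 :=
    fun hp ha => Ideal.Quotient.eq_zero_iff_mem.2 (isHomogeneous_mem_pow_idealOfVars hp ha)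
  have hDk : φ.mapMatrix D ^ (d + 1) = 0 := by
    rw [← map_pow]
    ext i j
    exact hφ (pow_apply_isHomogeneous hD (d + 1) i j) le_rfl
  have hBDC : ∀ k, d - 1 ≤ k → (B * D ^ k * C).map φ = 0 := by
    intro k hk
    ext i j
    exact hφ (mul_apply_isHomogeneous
      (mul_apply_isHomogeneous hB (pow_apply_isHomogeneous hD k)) hC i j) (by omega)
  -- The terms `i = d - 1` and `i = d` of the full geometric sum vanish modulo `I`.
  have hWmap : φ.mapMatrix W = A.map φ -
      ∑ i ∈ Finset.range (d + 1), B.map φ * (φ.mapMatrix D) ^ i * C.map φ := by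
    have hterm : ∀ i, B.map φ * (φ.mapMatrix D) ^ i * C.map φ = (B * D ^ i * C).map φ := by
      intro i
      rw [← map_pow, Matrix.map_mul, Matrix.map_mul, RingHom.mapMatrix_apply]
    simp_rw [hterm]
    rw [← Finset.sum_subset (Finset.range_mono (show d - 1 ≤ d + 1 by omega))
      (fun k _ hk => hBDC k (by simpa using hk)), hW, map_sub, map_sum]
    rfl
  have hblocks : φ.mapMatrix (fromBlocks A B C (1 - D)) =
      fromBlocks (A.map φ) (B.map φ) (C.map φ) (1 - φ.mapMatrix D) := by
    rw [RingHom.mapMatrix_apply, fromBlocks_map, ← RingHom.mapMatrix_apply φ (1 - D), map_sub,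
      map_one]
  have hschur := det_fromBlocks_mul_det_geom_sum (A.map φ) (B.map φ) (C.map φ) (φ.mapMatrix D)
    (d + 1) hDk
  rw [← hWmap, ← hblocks, ← RingHom.map_det, hdet, ← RingHom.map_det] at hschur
  have hE : φ.mapMatrix (∑ i ∈ Finset.range (d + 1), D ^ i) =
      ∑ i ∈ Finset.range (d + 1), φ.mapMatrix D ^ i := by
    simp only [map_sum, map_pow]
  rw [← hE, ← RingHom.map_det] at hschur
  have hfE : φ (f * ((∑ i ∈ Finset.range (d + 1), D ^ i).det - 1)) = 0 := by
    refine Ideal.Quotient.eq_zero_iff_mem.2 ?_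
    change _ ∈ idealOfVars (Fin n) F ^ (d + 1)
    rw [pow_succ]
    exact Ideal.mul_mem_mul (isHomogeneous_mem_pow_idealOfVars hf le_rfl)
      (det_geom_sum_sub_one_mem hD d)
  have hmem : W.det - f ∈ I := by
    rw [← Ideal.Quotient.eq_zero_iff_mem]
    change φ (W.det - f) = 0
    rw [map_sub, ← hschur, ← hfE, mul_sub, mul_one, map_sub, map_mul]
  have hcomp : ∀ e ≤ d, homogeneousComponent e W.det = homogeneousComponent e f := by
    intro e he
    rw [← sub_eq_zero, ← map_sub]
    ext x
    rw [coeff_homogeneousComponent, coeff_zero]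
    split_ifs with hx
    · exact (mem_pow_idealOfVars_iff' _ _).1 hmem x (by omega)
    · rfl
  refine ⟨fun e he => ?_, ?_⟩
  · rw [hcomp e he.le, homogeneousComponent_of_mem hf, if_neg he.ne]
  · rw [hcomp d le_rfl, homogeneousComponent_of_mem hf, if_pos rfl]
end

section
/- Let F be a field and let f ∈ F[x₁,…,xₙ] be a nonzero homogeneous polynomial of degree d ≥ 1 that has a determinantal representation M of size s whose constant part M(0) has rank s−r. Then r ≤ d. -/
/-!
Let `𝔪 = (x₁, …, xₙ)`. Determinant-one row and column operations over `F` bring the constant part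
`M(0)` to a diagonal matrix with exactly `r` zero entries. Applied to `M`, they keep `det M = f`
and produce `r` columns whose entries have no constant term, i.e. lie in `𝔪`. Every term of the
Leibniz expansion is then in `𝔪 ^ r` (`det_mem_pow_of_columns`), hence so is `f`. A monomial of `f`
has degree `d` by homogeneity and at least `r` by membership in `𝔪 ^ r`.
-/

open MvPolynomial Matrix

theorem det_mem_pow_of_columns {R : Type*} [CommRing R] {ι : Type*} [Fintype ι] [DecidableEq ι]
    (I : Ideal R) (N : Matrix ι ι R) (S : Finset ι) (h : ∀ j ∈ S, ∀ i, N i j ∈ I) :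
    N.det ∈ I ^ S.card := by
  rw [Matrix.det_apply]
  refine Ideal.sum_mem _ fun σ _ => ?_
  have hprod : ∏ j, N (σ j) j ∈ I ^ S.card := by
    rw [← Finset.prod_mul_prod_compl S]
    refine Ideal.mul_mem_right _ _ ?_
    rw [← Finset.prod_const]
    exact Ideal.prod_mem_prod fun j hj => h j hj _
  rw [Units.smul_def]
  exact zsmul_mem hprod _

/-- If a nonzero homogeneous polynomial `f` of degree `d ≥ 1` has a determinantal
representation `M` of size `s` whose constant part `M(0)` has rank `s - r` (with
`r ≤ s`), then `r ≤ d`. -/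
theorem corank_le_degree
    {F : Type*} [Field F] {n d s r : ℕ} (hd : 1 ≤ d)
    (f : MvPolynomial (Fin n) F) (hf0 : f ≠ 0) (hf : f.IsHomogeneous d)
    (M : Matrix (Fin s) (Fin s) (MvPolynomial (Fin n) F))
    (hdeg : ∀ i j, (M i j).totalDegree ≤ 1)
    (hdet : M.det = f)
    (hrs : r ≤ s)
    (hrank : (Matrix.of fun i j => MvPolynomial.coeff 0 (M i j)).rank = s - r) :
    r ≤ d := by
  classical
  set A : Matrix (Fin s) (Fin s) F := Matrix.of fun i j => MvPolynomial.coeff 0 (M i j) with hA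
  obtain ⟨L, L', D, hD⟩ := Matrix.Pivot.exists_list_transvec_mul_mul_list_transvec_eq_diagonal A
  have hP : (L.map TransvectionStruct.toMatrix).prod.det = 1 :=
    TransvectionStruct.det_toMatrix_prod L
  have hQ : (L'.map TransvectionStruct.toMatrix).prod.det = 1 :=
    TransvectionStruct.det_toMatrix_prod L'
  generalize (L.map TransvectionStruct.toMatrix).prod = P at hD hP
  generalize (L'.map TransvectionStruct.toMatrix).prod = Q at hD hQ
  have hcard : (Finset.univ.filter fun i => D i = 0).card = r := by
    have h1 : (diagonal D).rank = s - r := by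
      rw [← hD, Matrix.rank_mul_eq_left_of_isUnit_det _ _ (by simp [hQ]),
        Matrix.rank_mul_eq_right_of_isUnit_det _ _ (by simp [hP]), hrank]
    rw [Matrix.rank_diagonal, Fintype.card_subtype] at h1
    have h2 := Finset.card_filter_add_card_filter_not (s := (Finset.univ : Finset (Fin s)))
      (fun i => D i = 0)
    rw [Finset.card_univ, Fintype.card_fin] at h2
    have h1' : (Finset.univ.filter fun i => ¬ D i = 0).card = s - r := h1
    omega
  let N : Matrix (Fin s) (Fin s) (MvPolynomial (Fin n) F) := P.map C * M * Q.map C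
  have hNdet : N.det = f := by
    have hP' : (P.map (C : F →+* MvPolynomial (Fin n) F)).det = 1 := by
      rw [← RingHom.mapMatrix_apply, ← RingHom.map_det, hP, map_one]
    have hQ' : (Q.map (C : F →+* MvPolynomial (Fin n) F)).det = 1 := by
      rw [← RingHom.mapMatrix_apply, ← RingHom.map_det, hQ, map_one]
    simp only [N, det_mul, hP', hQ', hdet, one_mul, mul_one]
  have hN0 : N.map (constantCoeff : MvPolynomial (Fin n) F →+* F) = diagonal D := by
    have hM0 : M.map (constantCoeff : MvPolynomial (Fin n) F →+* F) = A := by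
      ext i j
      simp [hA, constantCoeff_eq]
    have hC : ∀ B : Matrix (Fin s) (Fin s) F,
        (B.map (C : F →+* MvPolynomial (Fin n) F)).map
          (constantCoeff : MvPolynomial (Fin n) F →+* F) = B := by
      intro B
      ext i j
      simp
    simp only [N, Matrix.map_mul, hC, hM0, hD]
  have hmem : f ∈ idealOfVars (Fin n) F ^ r := by
    rw [← hNdet, ← hcard]
    refine det_mem_pow_of_columns _ _ _ fun j hj i => ?_
    rw [← pow_one (idealOfVars (Fin n) F), mem_pow_idealOfVars_iff']
    intro x hx
    have hx0 : x = 0 := by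
      rw [← Finsupp.degree_eq_zero_iff]
      omega
    have hij := congrFun (congrFun hN0 i) j
    rw [Matrix.map_apply, constantCoeff_eq] at hij
    rw [hx0, hij, Matrix.diagonal_apply]
    split_ifs with h
    · rw [h]
      exact (Finset.mem_filter.mp hj).2
    · rfl
  obtain ⟨x, hx⟩ := MvPolynomial.ne_zero_iff.mp hf0
  have hle := (mem_pow_idealOfVars_iff r f).mp hmem x (mem_support_iff.mpr hx)
  have hxd : x.degree = d := by
    by_contra hne
    exact hx (hf.coeff_eq_zero hne)
  rwa [hxd] at hle
end

section
/- Let F be an algebraically closed field, let f ∈ F[x₁,…,xₙ], let r ≥ 1, and let M be an s×s matrix whose entries are polynomials in F[x₁,…,xₙ] such that det M = f. Suppose that the Krull dimension of the quotient ring F[x₁,…,xₙ]/I_r(f) is strictly less than n − (r+1)², where I_r(f) is the ideal generated by all partial derivatives of f of order at most r (including f itself). Then for every point a ∈ Fⁿ, the rank of the scalar matrix M(a) is at least s − r. -/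
/-!
Suppose `rank M(a) < s - r`. Then `a` lies on the locus where all minors of `M` of size
`s - r` vanish, and some prime `p`, minimal over the ideal of these minors, is contained in the
maximal ideal of `a`. Three facts about `p` contradict the hypothesis on the dimension.

* A prime minimal over the `(d + 1)`-minors of a square matrix of size `d + k` has height at most
  `k²` (`height_le_of_mem_minimalPrimes_minorIdeal`); here `k = r + 1`. The proof is by induction
  on `d`. When `d = 0` this is Krull's height theorem. If some entry of the matrix lies outside the
  prime, the Schur complement at that entry has smaller size and, near the prime, the same
  determinantal locus. If all entries lie in the prime, the same argument is applied over `R[X]` to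
  the matrix with `X` added to one entry; the extended prime `p R[X]` stays minimal by Krull's
  principal ideal theorem, and its height is at least that of `p`.
* A derivation maps the ideal of `(t + 1)`-minors into the ideal of `t`-minors
  (`derivation_mem_minorIdeal`), because a derivative of a determinant is a sum of determinants
  with one column replaced. Hence all partial derivatives of `f = det M` of order at most `r` lie
  in `p`, and `dim F[x]/p ≤ dim F[x]/I_r(f)`.
* `n ≤ ht p + dim F[x₁, …, xₙ]/p` (`natCast_le_height_add_ringKrullDim`).

Together, `n ≤ (r + 1)² + dim F[x]/I_r(f)`.
-/

open MvPolynomial Matrix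

/-- The iterated partial derivative of `g` with respect to the (not necessarily distinct)
variables listed in `l`. -/
noncomputable def iterPderiv {F : Type*} [Field F] {σ : Type*}
    (l : List σ) (g : MvPolynomial σ F) : MvPolynomial σ F :=
  l.foldl (fun h v => MvPolynomial.pderiv v h) g

universe u

/-! ### Ideals of minors -/

/-- The ideal generated by the `t × t` minors of `M`. Row and column selections are arbitrary
functions, so the generators also include the (vanishing) minors with repeated rows or columns. -/
def minorIdeal {R : Type*} [CommRing R] {m n : ℕ} (t : ℕ) (M : Matrix (Fin m) (Fin n) R) :
    Ideal R :=
  Ideal.span {d | ∃ (e : Fin t → Fin m) (f : Fin t → Fin n), d = (M.submatrix e f).det}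

section minors
variable {R : Type*} [CommRing R]

lemma det_submatrix_mem_minorIdeal {m n t : ℕ} (M : Matrix (Fin m) (Fin n) R)
    (e : Fin t → Fin m) (f : Fin t → Fin n) : (M.submatrix e f).det ∈ minorIdeal t M :=
  Ideal.subset_span ⟨e, f, rfl⟩

lemma minorIdeal_le_iff {m n t : ℕ} {M : Matrix (Fin m) (Fin n) R} {J : Ideal R} :
    minorIdeal t M ≤ J ↔
      ∀ (e : Fin t → Fin m) (f : Fin t → Fin n), (M.submatrix e f).det ∈ J := by
  refine ⟨fun h e f => h (det_submatrix_mem_minorIdeal M e f), fun h => ?_⟩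
  refine Ideal.span_le.2 ?_
  rintro _ ⟨e, f, rfl⟩
  exact h e f

lemma minorIdeal_submatrix_le {m n m' n' t : ℕ} (M : Matrix (Fin m) (Fin n) R)
    (e : Fin m' → Fin m) (f : Fin n' → Fin n) :
    minorIdeal t (M.submatrix e f) ≤ minorIdeal t M := by
  rw [minorIdeal_le_iff]
  intro e' f'
  exact det_submatrix_mem_minorIdeal M (e ∘ e') (f ∘ f')

/-- Laplace expansion along column `i`: replacing one column of a square matrix by an arbitrary
vector leaves the determinant in the ideal of the minors of size one less. -/
lemma det_updateCol_mem_minorIdeal {t : ℕ} (A : Matrix (Fin (t + 1)) (Fin (t + 1)) R)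
    (i : Fin (t + 1)) (v : Fin (t + 1) → R) : (A.updateCol i v).det ∈ minorIdeal t A := by
  rw [det_succ_column _ i]
  refine Ideal.sum_mem _ fun j _ => Ideal.mul_mem_left _ _ ?_
  rw [submatrix_updateCol_succAbove]
  exact det_submatrix_mem_minorIdeal _ _ _

lemma det_mem_minorIdeal {t : ℕ} (A : Matrix (Fin (t + 1)) (Fin (t + 1)) R) :
    A.det ∈ minorIdeal t A := by
  simpa using det_updateCol_mem_minorIdeal A 0 (fun k => A k 0)

lemma minorIdeal_succ_le {m n t : ℕ} (M : Matrix (Fin m) (Fin n) R) :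
    minorIdeal (t + 1) M ≤ minorIdeal t M := by
  rw [minorIdeal_le_iff]
  intro e f
  exact minorIdeal_submatrix_le M e f (det_mem_minorIdeal _)

/-- Fraction-free elimination of the first column. -/
lemma mul_det_schur {t : ℕ} (B : Matrix (Fin (t + 1)) (Fin (t + 1)) R) :
    B 0 0 * (Matrix.of fun i j : Fin t =>
      B 0 0 * B i.succ j.succ - B i.succ 0 * B 0 j.succ).det = B 0 0 ^ t * B.det := by
  set L : Matrix (Fin (t + 1)) (Fin (t + 1)) R :=
    Matrix.of (Fin.cons (Fin.cons 1 0)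
      (fun i => Fin.cons (-B i.succ 0) (fun j => if i = j then B 0 0 else 0))) with hL
  have hLdet : L.det = B 0 0 ^ t := by
    rw [det_succ_row_zero, Fin.sum_univ_succ]
    have : L.submatrix Fin.succ Fin.succ = Matrix.diagonal fun _ => B 0 0 := by
      ext i j
      simp [hL, diagonal_apply]
    simp [hL] at this ⊢
    simp [this]
  rw [← hLdet, ← det_mul, det_succ_column_zero (L * B), Fin.sum_univ_succ]
  have h1 : ∀ i : Fin t, (L * B) i.succ 0 = 0 := by
    intro i
    simp [hL, mul_apply, Fin.sum_univ_succ]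
    ring
  have h2 : (L * B) 0 0 = B 0 0 := by
    simp [hL, mul_apply, Fin.sum_univ_succ]
  have h3 : (L * B).submatrix Fin.succ Fin.succ = (Matrix.of fun i j : Fin t =>
      B 0 0 * B i.succ j.succ - B i.succ 0 * B 0 j.succ) := by
    ext i j
    simp [hL, mul_apply, Fin.sum_univ_succ]
    ring
  simp [h1, h2, h3]

/-- A rank one perturbation of `A` has determinant in the ideal of the submaximal minors
of `A`: it is the determinant of the bordered matrix `[[1, -r], [c, A]]`, and a double Laplace
expansion along the border only involves minors of `A`. -/
lemma det_add_rank_one_mem {t : ℕ} (A : Matrix (Fin (t + 1)) (Fin (t + 1)) R)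
    (c r : Fin (t + 1) → R) :
    (Matrix.of fun i j => A i j + c i * r j).det ∈ minorIdeal t A := by
  set B : Matrix (Fin (t + 2)) (Fin (t + 2)) R :=
    Matrix.of (Fin.cons (Fin.cons 1 (-r)) (fun i => Fin.cons (c i) (A i))) with hB
  have h := mul_det_schur B
  have h0 : B 0 0 = 1 := by simp [hB]
  have : (Matrix.of fun i j => A i j + c i * r j) = (Matrix.of fun i j : Fin (t + 1) =>
      B 0 0 * B i.succ j.succ - B i.succ 0 * B 0 j.succ) := by
    ext i j
    simp [hB]
  rw [this]
  rw [h0] at h ⊢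
  rw [one_mul, one_pow, one_mul] at h
  rw [h, det_succ_row_zero]
  refine Ideal.sum_mem _ fun j _ => Ideal.mul_mem_left _ _ ?_
  refine Fin.cases ?_ (fun j => ?_) j
  · have : B.submatrix Fin.succ (Fin.succAbove 0) = A := by
      ext i j
      simp [hB]
    rw [this]
    exact det_mem_minorIdeal A
  · rw [det_succ_column_zero]
    refine Ideal.sum_mem _ fun i _ => Ideal.mul_mem_left _ _ ?_
    have : (B.submatrix Fin.succ j.succ.succAbove).submatrix i.succAbove Fin.succ =
        A.submatrix i.succAbove j.succAbove := by
      ext a b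
      simp [hB]
    rw [this]
    exact det_submatrix_mem_minorIdeal _ _ _

/-- The fraction-free Schur complement of the entry `M i₀ j₀`. -/
def schurAt {s : ℕ} (M : Matrix (Fin (s + 1)) (Fin (s + 1)) R) (i₀ j₀ : Fin (s + 1)) :
    Matrix (Fin s) (Fin s) R :=
  Matrix.of fun i j => M i₀ j₀ * M (i₀.succAbove i) (j₀.succAbove j)
    - M (i₀.succAbove i) j₀ * M i₀ (j₀.succAbove j)

/-- At a prime avoiding the pivot, passing to the Schur complement lowers the rank by one. -/
lemma minorIdeal_schurAt_le_iff {s t : ℕ} (M : Matrix (Fin (s + 1)) (Fin (s + 1)) R)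
    (i₀ j₀ : Fin (s + 1)) (q : Ideal R) [q.IsPrime] (hu : M i₀ j₀ ∉ q) :
    minorIdeal t (schurAt M i₀ j₀) ≤ q ↔ minorIdeal (t + 1) M ≤ q := by
  constructor
  · intro h
    -- the Schur complement on the full index set: row `i₀` and column `j₀` vanish
    set N : Matrix (Fin (s + 1)) (Fin (s + 1)) R :=
      Matrix.of fun i j => M i₀ j₀ * M i j - M i j₀ * M i₀ j with hN
    have hNq : minorIdeal t N ≤ q := by
      rw [minorIdeal_le_iff]
      intro e f
      by_cases he : ∃ a, e a = i₀
      · obtain ⟨a, ha⟩ := he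
        rw [det_eq_zero_of_row_eq_zero a (fun j => by simp [hN, ha, mul_comm])]
        exact q.zero_mem
      by_cases hf : ∃ a, f a = j₀
      · obtain ⟨a, ha⟩ := hf
        rw [det_eq_zero_of_column_eq_zero a (fun j => by simp [hN, ha, mul_comm])]
        exact q.zero_mem
      push Not at he hf
      choose e' he' using fun a => Fin.exists_succAbove_eq (he a)
      choose f' hf' using fun a => Fin.exists_succAbove_eq (hf a)
      have : N.submatrix e f = (schurAt M i₀ j₀).submatrix e' f' := by
        ext a b
        simp [hN, schurAt, he', hf']
      rw [this]
      exact h (det_submatrix_mem_minorIdeal _ _ _)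
    rw [minorIdeal_le_iff]
    intro e f
    have h1 := hNq (minorIdeal_submatrix_le N e f (det_add_rank_one_mem (N.submatrix e f)
      (fun i => M (e i) j₀) (fun j => M i₀ (f j))))
    have h2 : (Matrix.of fun i j => N.submatrix e f i j + M (e i) j₀ * M i₀ (f j)) =
        M i₀ j₀ • M.submatrix e f := by
      ext i j
      simp [hN]
    rw [h2, det_smul] at h1
    exact (Ideal.IsPrime.mem_or_mem ‹_› h1).resolve_left
      fun h => hu (Ideal.IsPrime.mem_of_pow_mem ‹_› _ h)
  · intro h
    rw [minorIdeal_le_iff]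
    intro e f
    have h1 := mul_det_schur (M.submatrix (Fin.cons i₀ (i₀.succAbove ∘ e) : Fin (t + 1) → _)
      (Fin.cons j₀ (j₀.succAbove ∘ f) : Fin (t + 1) → _))
    have h2 := q.mul_mem_left (M i₀ j₀ ^ t) (h (det_submatrix_mem_minorIdeal M
      (Fin.cons i₀ (i₀.succAbove ∘ e) : Fin (t + 1) → _)
      (Fin.cons j₀ (j₀.succAbove ∘ f) : Fin (t + 1) → _)))
    simp only [submatrix_apply, Fin.cons_zero, Fin.cons_succ, Function.comp] at h1
    rw [← h1] at h2
    exact (Ideal.IsPrime.mem_or_mem ‹_› h2).resolve_left hu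

/-- A derivation maps `t + 1`-minors to combinations of `t`-minors. -/
lemma derivation_det_mem {F : Type*} [CommRing F] [Algebra F R] (D : Derivation F R R) {t : ℕ}
    (A : Matrix (Fin (t + 1)) (Fin (t + 1)) R) : D A.det ∈ minorIdeal t A := by
  have hprod : ∀ (S : Finset (Fin (t + 1))) (g : Fin (t + 1) → R),
      D (∏ j ∈ S, g j) = ∑ i ∈ S, ∏ j ∈ S, Function.update g i (D (g i)) j := by
    intro S g
    induction S using Finset.induction_on with
    | empty => simp
    | insert a S ha ih =>
      rw [Finset.prod_insert ha, D.leibniz, ih, Finset.sum_insert ha, Finset.prod_insert ha,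
        Function.update_self, add_comm]
      congr 1
      · rw [smul_eq_mul, mul_comm]
        congr 1
        refine Finset.prod_congr rfl fun j hj => ?_
        rw [Function.update_of_ne (by rintro rfl; exact ha hj)]
      · rw [smul_eq_mul, Finset.mul_sum]
        refine Finset.sum_congr rfl fun i hi => ?_
        rw [Finset.prod_insert ha, Function.update_of_ne (by rintro rfl; exact ha hi)]
  have : D A.det = ∑ i, (A.updateCol i (fun k => D (A k i))).det := by
    simp only [det_apply, map_sum, Units.smul_def, map_zsmul]
    rw [Finset.sum_comm]
    refine Finset.sum_congr rfl fun σ _ => ?_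
    rw [hprod, Finset.smul_sum]
    refine Finset.sum_congr rfl fun i _ => ?_
    congr 1
    refine Finset.prod_congr rfl fun j _ => ?_
    by_cases h : j = i
    · subst h; simp
    · simp [h]
  rw [this]
  exact Ideal.sum_mem _ fun i _ => det_updateCol_mem_minorIdeal _ _ _

lemma derivation_mem_minorIdeal {F : Type*} [CommRing F] [Algebra F R] (D : Derivation F R R)
    {m n t : ℕ} (M : Matrix (Fin m) (Fin n) R) {g : R} (hg : g ∈ minorIdeal (t + 1) M) :
    D g ∈ minorIdeal t M := by
  induction hg using Submodule.span_induction with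
  | mem x hx =>
    obtain ⟨e, f, rfl⟩ := hx
    exact minorIdeal_submatrix_le M e f (derivation_det_mem D _)
  | zero => simp
  | add x y _ _ hx hy => rw [map_add]; exact add_mem hx hy
  | smul a x hxm hx =>
    rw [smul_eq_mul, D.leibniz]
    exact add_mem (Ideal.mul_mem_left _ _ hx) (Ideal.mul_mem_right _ _ (minorIdeal_succ_le M hxm))
end minors

/-! ### Height and dimension in polynomial rings -/

section dim

/-- Going up: an integral extension has at least the dimension of the base. -/
lemma ringKrullDim_le_of_isIntegral {A B : Type*} [CommRing A] [CommRing B] (g : A →+* B)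
    (hinj : Function.Injective g) (hgint : g.IsIntegral) : ringKrullDim A ≤ ringKrullDim B := by
  algebraize [g]
  have hker : RingHom.ker (algebraMap A B) = ⊥ := (RingHom.injective_iff_ker_eq_bot _).1 hinj
  refine iSup_le fun l => ?_
  obtain ⟨Q, -, hQ, hQl⟩ := Ideal.exists_ideal_over_prime_of_isIntegral (R := A) (S := B)
    (RelSeries.head l).asIdeal ⊥ (by
      rw [← RingHom.ker_eq_comap_bot, hker]
      exact bot_le)
  have : Q.LiesOver (RelSeries.head l).asIdeal := ⟨hQl.symm⟩
  obtain ⟨L, hL, -⟩ := Ideal.exists_ltSeries_of_hasGoingUp (R := A) (S := B) l Q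
  rw [← hL]
  exact Order.LTSeries.length_le_krullDim L

/-- A finitely generated domain containing a polynomial ring in `m` variables has dimension at
least `m`: it is integral over a polynomial ring in some number `d` of variables, and `m ≤ d` by
comparing transcendence degrees. -/
lemma natCast_le_ringKrullDim_of_injective {F B : Type u} [Field F] [CommRing B] [IsDomain B]
    [Algebra F B] [Algebra.FiniteType F B] {m : ℕ} (φ : MvPolynomial (Fin m) F →ₐ[F] B)
    (hφ : Function.Injective φ) : (m : WithBot ℕ∞) ≤ ringKrullDim B := by
  obtain ⟨d, g, hinj, hgint⟩ := exists_integral_inj_algHom_of_fg F B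
  have h1 := ringKrullDim_le_of_isIntegral g.toRingHom hinj hgint
  rw [MvPolynomial.ringKrullDim_of_isNoetherianRing] at h1
  refine le_trans ?_ h1
  have h2 : (m : Cardinal.{u}) ≤ Algebra.trdeg F B := by
    simpa using trdeg_le_of_injective φ hφ
  have h3 : Algebra.trdeg F B = d := by
    let _ := g.toRingHom.toAlgebra
    have : IsScalarTower F (MvPolynomial (Fin d) F) B := IsScalarTower.of_algHom g
    have : FaithfulSMul (MvPolynomial (Fin d) F) B :=
      (faithfulSMul_iff_algebraMap_injective _ _).2 hinj
    have : Algebra.IsIntegral (MvPolynomial (Fin d) F) B := ⟨hgint⟩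
    rw [← trdeg_add_eq F (MvPolynomial (Fin d) F) (A := B),
      trdeg_eq_zero (R := MvPolynomial (Fin d) F) (A := B)]
    simp
  rw [h3] at h2
  have h4 : m ≤ d := by exact_mod_cast h2
  simpa using h4

/-- `A/p` contains a polynomial ring over `F` in at least `N - ht p` variables, for every
prime `p` of `A`. -/
def DimIneq (F A : Type u) [Field F] [CommRing A] [Algebra F A] (N : ℕ) : Prop :=
  ∀ (p : Ideal A) [p.IsPrime], ∃ (m : ℕ) (φ : MvPolynomial (Fin m) F →ₐ[F] A ⧸ p),
    Function.Injective φ ∧ (N : ℕ∞) ≤ p.height + m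

lemma DimIneq.of_algEquiv {F A B : Type u} [Field F] [CommRing A] [Algebra F A] [CommRing B]
    [Algebra F B] {N : ℕ} (h : DimIneq F A N) (e : B ≃ₐ[F] A) : DimIneq F B N := by
  intro p _
  obtain ⟨m, φ, hφ, hm⟩ := h (p.comap (e.symm : A →+* B))
  have hp : p.comap (e.symm : A →+* B) = p.map (e : B →+* A) := Ideal.comap_symm e.toRingEquiv
  let e' := (Ideal.quotientEquivAlg p (p.comap (e.symm : A →+* B)) e hp).symm
  refine ⟨m, e'.toAlgHom.comp φ, e'.injective.comp hφ, ?_⟩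
  have : (p.comap (e.symm : A →+* B)).height = p.height := e.symm.toRingEquiv.height_comap p
  rwa [this] at hm

/-- Going down along the flat extension `A → A[X]`. -/
lemma height_le_height_map_C_s13 {A : Type*} [CommRing A] [IsNoetherianRing A] (q : Ideal A)
    [q.IsPrime] : q.height ≤ (q.map (Polynomial.C : A →+* Polynomial A)).height := by
  have : (q.map (Polynomial.C : A →+* Polynomial A)).IsPrime := Ideal.isPrime_map_C_of_isPrime
  have : (q.map (Polynomial.C : A →+* Polynomial A)).LiesOver q := by
    refine ⟨le_antisymm Ideal.le_comap_map fun x hx => ?_⟩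
    have hx' : Polynomial.C x ∈ q.map (Polynomial.C : A →+* Polynomial A) := hx
    simpa using Ideal.mem_map_C_iff.1 hx' 0
  rw [Ideal.height_eq_height_add_of_liesOver_of_hasGoingDown q
    (q.map (Polynomial.C : A →+* Polynomial A))]
  exact le_self_add

/-- For a prime `p` of `A[X]` over `q`, either `p = q A[X]`, and then `A[X]/p = (A/q)[X]` gains a
variable, or `p` is strictly bigger than `q A[X]`, and then its height exceeds that of `q`. -/
lemma DimIneq.polynomial {F A : Type u} [Field F] [CommRing A] [IsNoetherianRing A] [Algebra F A]
    {N : ℕ} (h : DimIneq F A N) : DimIneq F (Polynomial A) (N + 1) := by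
  intro p _
  set q : Ideal A := p.comap (Polynomial.C : A →+* Polynomial A) with hq
  have hqp : q.map (Polynomial.C : A →+* Polynomial A) ≤ p := Ideal.map_comap_le
  have : (q.map (Polynomial.C : A →+* Polynomial A)).IsPrime :=
    Ideal.isPrime_map_C_of_isPrime
  have hht := height_le_height_map_C_s13 q
  obtain ⟨m, φ, hφ, hm⟩ := h q
  rcases hqp.eq_or_lt with heq | hlt
    -- `ψ` is the isomorphism `(A/q)[X] ≃ A[X]/q A[X]`, as an `F`-algebra map
  · let ψ : Polynomial (A ⧸ q) →ₐ[F] Polynomial A ⧸ p :=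
      { ((Ideal.quotEquivOfEq heq).toRingHom.comp
          (Ideal.polynomialQuotientEquivQuotientPolynomial q).toRingHom) with
        commutes' := by
          intro c
          have : (algebraMap F (Polynomial (A ⧸ q)) c) =
            (Polynomial.C (algebraMap F A c)).map (Ideal.Quotient.mk q) := by
              rw [Polynomial.map_C]; rfl
          rw [this]
          exact congrArg (Ideal.quotEquivOfEq heq)
            (Ideal.polynomialQuotientEquivQuotientPolynomial_map_mk q _) }
    have hψ : Function.Injective ψ :=
      (Ideal.quotEquivOfEq heq).injective.comp
        (Ideal.polynomialQuotientEquivQuotientPolynomial q).injective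
    refine ⟨m + 1, (ψ.comp (Polynomial.mapAlgHom φ)).comp
      (MvPolynomial.finSuccEquiv F m : _ →ₐ[F] _), ?_, ?_⟩
    · exact (hψ.comp (Polynomial.map_injective φ.toRingHom hφ)).comp (AlgEquiv.injective _)
    · rw [← heq]
      push_cast
      rw [← add_assoc]
      gcongr
      exact hm.trans (by gcongr)
  · let ψ : A ⧸ q →ₐ[F] Polynomial A ⧸ p :=
      Ideal.quotientMapₐ p (Polynomial.CAlgHom : A →ₐ[F] Polynomial A) le_rfl
    have hψ : Function.Injective ψ :=
      Ideal.quotientMap_injective' (f := Polynomial.C) (H := le_rfl) le_rfl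
    refine ⟨m, ψ.comp φ, hψ.comp hφ, ?_⟩
    have h1 := Ideal.height_add_one_le_of_lt_of_isPrime hlt
    push_cast
    calc (N : ℕ∞) + 1 ≤ q.height + m + 1 := by gcongr
      _ = (q.height + 1) + m := by ring
      _ ≤ p.height + m := by
        gcongr
        exact le_trans (by gcongr) h1

lemma dimIneq_mvPolynomial (F : Type u) [Field F] (n : ℕ) :
    DimIneq F (MvPolynomial (Fin n) F) n := by
  induction n with
  | zero =>
    intro p _
    refine ⟨0, (Algebra.ofId F _).comp (MvPolynomial.isEmptyAlgEquiv F (Fin 0) : _ →ₐ[F] F), ?_, by simp⟩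
    exact (algebraMap F (MvPolynomial (Fin 0) F ⧸ p)).injective.comp (AlgEquiv.injective _)
  | succ n ih => exact ih.polynomial.of_algEquiv (MvPolynomial.finSuccEquiv F n)

/-- The inequality `n ≤ ht p + dim F[x₁, …, xₙ]/p`. -/
lemma natCast_le_height_add_ringKrullDim {F : Type u} [Field F] {n : ℕ}
    (p : Ideal (MvPolynomial (Fin n) F)) [p.IsPrime] :
    (n : WithBot ℕ∞) ≤ (p.height : WithBot ℕ∞) + ringKrullDim (MvPolynomial (Fin n) F ⧸ p) := by
  obtain ⟨m, φ, hφ, hm⟩ := dimIneq_mvPolynomial F n p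
  have h1 := natCast_le_ringKrullDim_of_injective φ hφ
  calc (n : WithBot ℕ∞) = ((n : ℕ∞) : WithBot ℕ∞) := rfl
    _ ≤ ((p.height + m : ℕ∞) : WithBot ℕ∞) := WithBot.coe_le_coe.2 hm
    _ = (p.height : WithBot ℕ∞) + m := by push_cast; rfl
    _ ≤ _ := by gcongr
end dim

/-! ### The height of determinantal ideals -/

section height

/-- A prime `p` that is minimal over the `(t + 1)`-minors of `M` and misses the entry at `(i₀, j₀)`
is minimal over the `t`-minors of the Schur complement at that entry. -/
lemma mem_minimalPrimes_schurAt {R : Type*} [CommRing R] {s t : ℕ}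
    (M : Matrix (Fin (s + 1)) (Fin (s + 1)) R) (i₀ j₀ : Fin (s + 1)) {p : Ideal R}
    (hp : p ∈ (minorIdeal (t + 1) M).minimalPrimes) (hu : M i₀ j₀ ∉ p) :
    p ∈ (minorIdeal t (schurAt M i₀ j₀)).minimalPrimes := by
  have := hp.1.1
  refine ⟨⟨hp.1.1, (minorIdeal_schurAt_le_iff M i₀ j₀ p hu).2 hp.1.2⟩, ?_⟩
  rintro q ⟨hq, hqle⟩ hqp
  exact hp.2 ⟨hq, (minorIdeal_schurAt_le_iff M i₀ j₀ q fun h => hu (hqp h)).1 hqle⟩ hqp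

/-- The matrix over `R[X]` obtained from `M` by adding `X` to the upper left entry. -/
noncomputable def deform {R : Type*} [CommRing R] {s : ℕ}
    (M : Matrix (Fin (s + 1)) (Fin (s + 1)) R) :
    Matrix (Fin (s + 1)) (Fin (s + 1)) (Polynomial R) :=
  Matrix.of fun i j => Polynomial.C (M i j) + if i = 0 ∧ j = 0 then Polynomial.X else 0

/-- Modulo an ideal containing all entries of `M`, the deformed matrix has at most one nonzero entry,
so its minors of size at least two vanish. -/
lemma minorIdeal_deform_le {R : Type*} [CommRing R] {s t : ℕ}
    (M : Matrix (Fin (s + 1)) (Fin (s + 1)) R) {p : Ideal R} (hM : ∀ i j, M i j ∈ p) :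
    minorIdeal (t + 2) (deform M) ≤ p.map (Polynomial.C : R →+* Polynomial R) := by
  rw [minorIdeal_le_iff]
  intro e f
  rw [← Ideal.Quotient.eq_zero_iff_mem, RingHom.map_det]
  set π := Ideal.Quotient.mk (p.map (Polynomial.C : R →+* Polynomial R)) with hπ
  have hC : ∀ i j, π (Polynomial.C (M i j)) = 0 := fun i j =>
    Ideal.Quotient.eq_zero_iff_mem.2 (Ideal.mem_map_of_mem _ (hM i j))
  by_cases h : ∃ i, e i ≠ 0
  · obtain ⟨i, hi⟩ := h
    refine Matrix.det_eq_zero_of_row_eq_zero i fun j => ?_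
    simp [deform, hi, hC]
  · push Not at h
    refine Matrix.det_zero_of_row_eq (i := 0) (j := 1) (by simp) ?_
    ext j
    simp [h]

/-- If all entries of `M` lie in a prime `p` minimal over the minors of `M`, then `p R[X]` is
minimal over the minors of the deformed matrix. Indeed let `P` be a prime between those minors and
`p R[X]`. Setting `X = 0` shows that `(p, X)` is minimal over `P + (X)`, so `(p, X)/P` has height
at most one by Krull's principal ideal theorem; as `p R[X]` lies strictly below `(p, X)`, it
equals `P`. -/
lemma map_C_mem_minimalPrimes_deform {R : Type*} [CommRing R] [IsNoetherianRing R] {s t : ℕ}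
    (M : Matrix (Fin (s + 1)) (Fin (s + 1)) R) {p : Ideal R}
    (hp : p ∈ (minorIdeal (t + 2) M).minimalPrimes) (hM : ∀ i j, M i j ∈ p) :
    p.map (Polynomial.C : R →+* Polynomial R) ∈
      (minorIdeal (t + 2) (deform M)).minimalPrimes := by
  have hpp := hp.1.1
  have hpC : (p.map (Polynomial.C : R →+* Polynomial R)).IsPrime :=
    Ideal.isPrime_map_C_of_isPrime
  refine ⟨⟨hpC, minorIdeal_deform_le M hM⟩, ?_⟩
  rintro P ⟨hP, hMP⟩ hPp
  -- the prime `(p, X)`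
  set Q : Ideal (Polynomial R) := p.comap Polynomial.constantCoeff with hQ
  have hQprime : Q.IsPrime := Ideal.comap_isPrime _ _
  have hpQ : p.map (Polynomial.C : R →+* Polynomial R) < Q := by
    refine lt_of_le_of_ne (Ideal.map_le_iff_le_comap.2 fun x hx => ?_) fun heq => ?_
    · simpa [hQ] using hx
    · have hX : (Polynomial.X : Polynomial R) ∈ Q := by simp [hQ]
      rw [← heq, Ideal.mem_map_C_iff] at hX
      have h1 := hX 1
      rw [Polynomial.coeff_X_one] at h1
      exact hpp.ne_top ((Ideal.eq_top_iff_one _).2 h1)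
  have hQmin : Q ∈ (P ⊔ Ideal.span {Polynomial.X}).minimalPrimes := by
    refine ⟨⟨hQprime, sup_le (hPp.trans hpQ.le) ?_⟩, ?_⟩
    · rw [Ideal.span_singleton_le_iff_mem]
      simp [hQ]
    rintro Q' ⟨hQ', hPQ'⟩ hQ'Q
    have hXQ' : (Polynomial.X : Polynomial R) ∈ Q' :=
      hPQ' (Ideal.mem_sup_right (Ideal.mem_span_singleton_self _))
    have hmin : minorIdeal (t + 2) M ≤ Q'.comap (Polynomial.C : R →+* Polynomial R) := by
      rw [minorIdeal_le_iff]
      intro e f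
      have h1 : ((deform M).submatrix e f).det ∈ Q' :=
        hPQ' (Ideal.mem_sup_left (hMP (det_submatrix_mem_minorIdeal _ e f)))
      rw [Ideal.mem_comap]
      rw [← Ideal.Quotient.eq_zero_iff_mem, RingHom.map_det] at h1 ⊢
      rw [RingHom.map_det, ← h1]
      congr 1
      ext i j
      have hX0 := Ideal.Quotient.eq_zero_iff_mem.2 hXQ'
      by_cases hij : e i = 0 ∧ f j = 0 <;> simp [deform, hij, hX0]
    have hple : p ≤ Q'.comap (Polynomial.C : R →+* Polynomial R) := by
      refine hp.2 ⟨Ideal.comap_isPrime _ _, hmin⟩ fun x hx => ?_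
      simpa [hQ] using hQ'Q (Ideal.mem_comap.1 hx)
    intro g hg
    rw [← Polynomial.divX_mul_X_add g]
    exact Q'.add_mem (Q'.mul_mem_left _ hXQ') (hple hg)
  have hht := Ideal.map_height_le_one_of_mem_minimalPrimes hQmin
  by_contra hne
  have hlt : P < p.map (Polynomial.C : R →+* Polynomial R) := lt_of_le_not_ge hPp hne
  set π := Ideal.Quotient.mk P with hπ
  have hker : RingHom.ker π = P := Ideal.mk_ker
  have hsurj : Function.Surjective π := Ideal.Quotient.mk_surjective
  have hp1 : ((p.map (Polynomial.C : R →+* Polynomial R)).map π).IsPrime :=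
    Ideal.map_isPrime_of_surjective hsurj (hker.trans_le hPp)
  have hQ1 : (Q.map π).IsPrime :=
    Ideal.map_isPrime_of_surjective hsurj (hker.trans_le (hPp.trans hpQ.le))
  have hcomap : ∀ I : Ideal (Polynomial R), P ≤ I → (I.map π).comap π = I := fun I hI => by
    rw [Ideal.comap_map_of_surjective' _ hsurj, hker, sup_eq_left.2 hI]
  have hlt1 : (⊥ : Ideal (Polynomial R ⧸ P)) <
      (p.map (Polynomial.C : R →+* Polynomial R)).map π := by
    refine bot_lt_iff_ne_bot.2 fun h0 => hne ?_
    rwa [Ideal.map_eq_bot_iff_le_ker, hker] at h0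
  have hlt2 : (p.map (Polynomial.C : R →+* Polynomial R)).map π < Q.map π := by
    refine lt_of_le_of_ne (Ideal.map_mono hpQ.le) fun h0 => hpQ.ne ?_
    rw [← hcomap _ hPp, h0, hcomap _ (hPp.trans hpQ.le)]
  have h1 := Ideal.height_add_one_le_of_lt_of_isPrime hlt1
  have h2 := Ideal.height_add_one_le_of_lt_of_isPrime hlt2
  have h3 : (1 : ℕ∞) + 1 ≤ 1 :=
    (add_le_add_left (le_trans le_add_self h1) 1).trans (h2.trans hht)
  exact absurd h3 (by decide)

/-- The determinantal height bound: a prime minimal over the `(d + 1)`-minors of a square matrix of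
size `d + k` has height at most `k²`. If some entry is outside the prime, pass to the Schur
complement there; otherwise first deform the matrix so that this becomes true. -/
lemma height_le_of_mem_minimalPrimes_minorIdeal (k d : ℕ) :
    ∀ {R : Type u} [CommRing R] [IsNoetherianRing R] {s : ℕ} (_ : s = d + k)
      (M : Matrix (Fin s) (Fin s) R) {p : Ideal R},
      p ∈ (minorIdeal (d + 1) M).minimalPrimes → p.height ≤ (k ^ 2 : ℕ) := by
  induction d with
  | zero =>
    intro R _ _ s hs M p hp
    have hspan : minorIdeal 1 M = Ideal.span (Set.range fun x : Fin s × Fin s => M x.1 x.2) := by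
      refine le_antisymm (minorIdeal_le_iff.2 fun e f => ?_) (Ideal.span_le.2 ?_)
      · rw [Matrix.det_fin_one]
        exact Ideal.subset_span ⟨(e 0, f 0), rfl⟩
      · rintro _ ⟨⟨i, j⟩, rfl⟩
        have := det_submatrix_mem_minorIdeal M (fun _ : Fin 1 => i) (fun _ => j)
        rwa [Matrix.det_fin_one] at this
    rw [zero_add, hspan] at hp
    refine (Ideal.height_le_card_of_mem_minimalPrimes_span (Set.finite_range _) hp).trans ?_
    have hcard : (Set.range fun x : Fin s × Fin s => M x.1 x.2).ncard ≤ k ^ 2 := by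
      rw [← Set.image_univ]
      refine (Set.ncard_image_le Set.finite_univ).trans ?_
      rw [Set.ncard_univ, Nat.card_eq_fintype_card, Fintype.card_prod, Fintype.card_fin, hs,
        zero_add, sq]
    exact_mod_cast hcard
  | succ d ih =>
    intro R _ _ s hs M p hp
    obtain rfl : s = (d + k) + 1 := by omega
    by_cases hM : ∀ i j, M i j ∈ p
    · have := hp.1.1
      have hmin := map_C_mem_minimalPrimes_deform M hp hM
      have hX : deform M 0 0 ∉ p.map (Polynomial.C : R →+* Polynomial R) := by
        intro h
        have h1 := Ideal.mem_map_C_iff.1 h 1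
        simp only [deform, Matrix.of_apply, and_self, if_true, Polynomial.coeff_add,
          Polynomial.coeff_C_succ, Polynomial.coeff_X_one, zero_add] at h1
        exact hp.1.1.ne_top ((Ideal.eq_top_iff_one _).2 h1)
      exact (height_le_height_map_C_s13 p).trans
        (ih rfl _ (mem_minimalPrimes_schurAt (deform M) 0 0 hmin hX))
    · push Not at hM
      obtain ⟨i, j, hij⟩ := hM
      exact ih rfl _ (mem_minimalPrimes_schurAt M i j hp hij)

end height

/-! ### Derivatives of the determinant and the rank bound -/

lemma iterPderiv_mem_minorIdeal {F : Type*} [Field F] {n s : ℕ}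
    (M : Matrix (Fin s) (Fin s) (MvPolynomial (Fin n) F)) (l : List (Fin n)) :
    ∀ (t : ℕ) (g : MvPolynomial (Fin n) F), g ∈ minorIdeal (t + l.length) M →
      iterPderiv l g ∈ minorIdeal t M := by
  induction l with
  | nil => intro t g hg; exact hg
  | cons v l ih =>
    intro t g hg
    exact ih t (pderiv v g) (derivation_mem_minorIdeal (pderiv v) M hg)

lemma minorIdeal_antitone {R : Type*} [CommRing R] {m n : ℕ} (M : Matrix (Fin m) (Fin n) R) :
    Antitone fun t => minorIdeal t M :=
  antitone_nat_of_succ_le fun _ => minorIdeal_succ_le M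

/-- Let `F` be algebraically closed, `r ≥ 1`, and `M` an `s × s` matrix of polynomials with
`det M = f`. If the Krull dimension of `F[x]/I_r(f)` — where `I_r(f)` is the ideal
generated by all partial derivatives of `f` of order at most `r`, including `f` itself —
is strictly less than `n - (r+1)²`, then `M(a)` has rank at least `s - r` for every point
`a ∈ Fⁿ`. -/
theorem rank_ge_of_small_higher_singular_locus
    {F : Type*} [Field F] [IsAlgClosed F] {n s r : ℕ} (hr : 1 ≤ r)
    (f : MvPolynomial (Fin n) F)
    (M : Matrix (Fin s) (Fin s) (MvPolynomial (Fin n) F))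
    (hdet : M.det = f)
    (hsing : ringKrullDim (MvPolynomial (Fin n) F ⧸
        Ideal.span {g : MvPolynomial (Fin n) F |
          ∃ l : List (Fin n), l.length ≤ r ∧ g = iterPderiv l f}) + ((r+1)^2 : ℕ)
      < (n : WithBot ℕ∞)) :
    ∀ a : Fin n → F, s - r ≤ (Matrix.of fun i j => MvPolynomial.eval a (M i j)).rank := by
  intro a
  by_contra! hlt
  -- write `s = d + (r + 1)`; the relevant minors have size `d + 1 = s - r`
  obtain ⟨d, rfl⟩ : ∃ d, s = d + (r + 1) := ⟨s - (r + 1), by omega⟩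
  have hprime : (RingHom.ker (MvPolynomial.eval a)).IsPrime := RingHom.ker_isPrime _
  have hle : minorIdeal (d + 1) M ≤ RingHom.ker (MvPolynomial.eval a) := by
    rw [minorIdeal_le_iff]
    intro e g
    rw [RingHom.mem_ker, RingHom.map_det]
    by_contra hne
    have h1 := rank_of_det_ne_zero hne
    rw [Fintype.card_fin] at h1
    have h2 := rank_submatrix_le (Matrix.of fun i j => MvPolynomial.eval a (M i j)) e g
    have h3 : (MvPolynomial.eval a).mapMatrix (M.submatrix e g) =
      (Matrix.of fun i j => MvPolynomial.eval a (M i j)).submatrix e g := rfl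
    rw [h3] at h1
    omega
  obtain ⟨p, hp, -⟩ := Ideal.exists_minimalPrimes_le hle
  have hpp := hp.1.1
  have hht := height_le_of_mem_minimalPrimes_minorIdeal (r + 1) d rfl M hp
  have hIp : Ideal.span {g : MvPolynomial (Fin n) F |
      ∃ l : List (Fin n), l.length ≤ r ∧ g = iterPderiv l f} ≤ p := by
    rw [Ideal.span_le]
    rintro _ ⟨l, hl, rfl⟩
    refine hp.1.2 (iterPderiv_mem_minorIdeal M l _ _
      (minorIdeal_antitone M (show d + 1 + l.length ≤ d + (r + 1) by omega) ?_))
    rw [← hdet]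
    exact det_submatrix_mem_minorIdeal M id id
  have hdim := ringKrullDim_le_of_surjective (Ideal.Quotient.factor hIp)
    (Ideal.Quotient.factor_surjective hIp)
  refine absurd hsing (not_lt.2 ?_)
  refine (natCast_le_height_add_ringKrullDim p).trans ?_
  rw [add_comm]
  refine add_le_add hdim ?_
  exact_mod_cast WithBot.coe_le_coe.2 hht
end
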